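/- arXiv:1605.09754 — 2 statements merged into one kernel-verified Lean document; each statement's English description precedes it below -/
import Mathlib

section
/- Let Ω ⊆ ℝ^N be open, v : Ω → [-∞, ∞) subharmonic, and suppose limsup_{x→ζ, x∈E} v(x) < v(ζ) for some set E ⊆ Ω and some ζ that is a limit point of E. Then E is thin at ζ. -/
open MeasureTheory Metric Filter Topology Set

noncomputable section

variable {E : Type*} [NormedAddCommGroup E] [InnerProductSpace ℝ E]
  [MeasurableSpace E] [BorelSpace E]

/-- The mean of an extended-real-valued function over the sphere of center `x`
and radius `r`, with respect to `d`-dimensional Hausdorff measure, defined as the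
infimum of the averages of the truncations `v ⊔ (-n)`. -/
def sphereMean (d : ℝ) (v : E → EReal) (x : E) (r : ℝ) : EReal :=
  ⨅ n : ℕ, ((⨍ y in sphere x r, ((v y) ⊔ (-(n : ℝ) : EReal)).toReal ∂ μH[d] : ℝ) : EReal)

/-- `v : E → [-∞, ∞)` is subharmonic on `U` (with sphere dimension `d = N - 1`):
upper semicontinuous on `U`, `< ∞`, not identically `-∞`, and satisfying the
sub-mean value inequality on spheres of closed balls contained in `U`. -/
def IsSubharmonicOn (d : ℝ) (v : E → EReal) (U : Set E) : Prop :=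
  UpperSemicontinuousOn v U ∧ (∀ x ∈ U, v x < ⊤) ∧ (∃ x ∈ U, v x ≠ ⊥) ∧
    ∀ x r, 0 < r → closedBall x r ⊆ U → v x ≤ sphereMean d v x r

/-- `u : E → (-∞, ∞]` is superharmonic on `U` iff `-u` is subharmonic on `U`. -/
def IsSuperharmonicOn (d : ℝ) (u : E → EReal) (U : Set E) : Prop :=
  IsSubharmonicOn d (fun x => -(u x)) U

/-- A set is polar if it is contained in the `-∞`-set of a function subharmonic
on a neighborhood of it. -/
def IsPolar (d : ℝ) (S : Set E) : Prop :=
  ∃ U : Set E, IsOpen U ∧ S ⊆ U ∧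
    ∃ v : E → EReal, IsSubharmonicOn d v U ∧ ∀ x ∈ S, v x = ⊥

/-- The fine topology: the coarsest topology making every globally defined
subharmonic function continuous. -/
def fineTopology (E : Type*) [NormedAddCommGroup E] [InnerProductSpace ℝ E]
    [MeasurableSpace E] [BorelSpace E] (d : ℝ) : TopologicalSpace E :=
  ⨅ (v : E → EReal) (_ : IsSubharmonicOn d v Set.univ),
    TopologicalSpace.induced v inferInstance

/-- A set `A` is thin at `ζ` if `ζ` is not a fine limit point of `A`. -/
def ThinAt (d : ℝ) (A : Set E) (ζ : E) : Prop :=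
  ζ ∉ @closure E (fineTopology E d) (A \ {ζ})

/-- A real-valued function is harmonic on `U` if it is continuous on `U` and
satisfies the mean value equality on spheres of closed balls contained in `U`. -/
def IsHarmonicOn (d : ℝ) (h : E → ℝ) (U : Set E) : Prop :=
  ContinuousOn h U ∧ ∀ x r, 0 < r → closedBall x r ⊆ U →
    h x = ⨍ y in sphere x r, h y ∂ μH[d]

/-- An open set is Greenian if it carries a positive superharmonic function that
is not harmonic (i.e. a potential-like function exists). -/
def IsGreenian (d : ℝ) (ω : Set E) : Prop :=
  ω.Nonempty ∧ ∃ u : E → EReal, IsSuperharmonicOn d u ω ∧ (∀ x ∈ ω, 0 < u x) ∧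
    ¬ ∃ h : E → ℝ, IsHarmonicOn d h ω ∧ ∀ x ∈ ω, u x = (h x : EReal)

/-- The Perron upper class of a boundary function `f` on `ω`. -/
def upperClass (d : ℝ) (ω : Set E) (f : E → EReal) : Set (E → EReal) :=
  {u | IsSuperharmonicOn d u ω ∧ (∃ c : ℝ, ∀ x ∈ ω, (c : EReal) ≤ u x) ∧
    ∀ ζ ∈ frontier ω, f ζ ≤ Filter.liminf u (nhdsWithin ζ ω)}

/-- The upper Perron–Wiener–Brelot solution of the Dirichlet problem on `ω`
with boundary data `f`. -/
def PWB (d : ℝ) (ω : Set E) (f : E → EReal) (x : E) : EReal :=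
  ⨅ u ∈ upperClass d ω f, u x

/-- A boundary point `ζ` of `ω` is regular for the Dirichlet problem if for every
continuous boundary data the PWB solution attains the boundary value at `ζ`. -/
def IsRegularBoundaryPoint (d : ℝ) (ω : Set E) (ζ : E) : Prop :=
  ζ ∈ frontier ω ∧ ∀ f : E → ℝ, ContinuousOn f (frontier ω) →
    Filter.Tendsto (PWB d ω (fun y => (f y : EReal))) (nhdsWithin ζ ω) (nhds ((f ζ : EReal)))

/-- `A ⊆ ∂ω` is negligible for `ω` if it has harmonic measure zero, harmonic
measure being the PWB solution for the indicator boundary data. -/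
def IsNegligible (d : ℝ) (ω A : Set E) : Prop :=
  ∀ x ∈ ω, PWB d ω (fun y => ((A.indicator (fun _ => (1 : ℝ)) y : ℝ) : EReal)) x = 0

end


section RotationAverage

open scoped ENNReal

variable {E : Type*} [NormedAddCommGroup E] [InnerProductSpace ℝ E] [CompleteSpace E]

omit [InnerProductSpace ℝ E] [CompleteSpace E] in
/-- The spherical integral of `F` is transported by isometries. -/
theorem lintegral_sphere_comp_isometryEquiv [MeasurableSpace E] [BorelSpace E]
    (d : ℝ) (e : E ≃ᵢ E) (F : E → ℝ≥0∞) (y : E) (r : ℝ) :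
    ∫⁻ z in sphere y r, F (e z) ∂μH[d] = ∫⁻ z in sphere (e y) r, F z ∂μH[d] := by
  rw [← (e.measurePreserving_hausdorffMeasure d).setLIntegral_comp_preimage_emb
    e.toHomeomorph.measurableEmbedding F (sphere (e y) r), e.preimage_sphere, e.symm_apply_apply]

omit [InnerProductSpace ℝ E] [CompleteSpace E] in
theorem hausdorffMeasure_sphere_isometryEquiv [MeasurableSpace E] [BorelSpace E]
    (d : ℝ) (e : E ≃ᵢ E) (y : E) (r : ℝ) :
    μH[d] (sphere (e y) r) = μH[d] (sphere y r) := by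
  simpa using (lintegral_sphere_comp_isometryEquiv d e (fun _ => 1) y r).symm

/-- Rotation about `x` by a unitary operator. -/
noncomputable def rotationAbout (x : E) (g : unitary (E →L[ℝ] E)) : E ≃ᵢ E :=
  ((IsometryEquiv.subRight x).trans (Unitary.linearIsometryEquiv g).toIsometryEquiv).trans
    (IsometryEquiv.addLeft x)

theorem rotationAbout_apply (x : E) (g : unitary (E →L[ℝ] E)) (y : E) :
    rotationAbout x g y = x + (g : E →L[ℝ] E) (y - x) := rfl

theorem rotationAbout_center (x : E) (g : unitary (E →L[ℝ] E)) : rotationAbout x g x = x := by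
  simp [rotationAbout_apply]

theorem rotationAbout_mul (x : E) (g h : unitary (E →L[ℝ] E)) (y : E) :
    rotationAbout x (g * h) y = rotationAbout x g (rotationAbout x h y) := by
  simp [rotationAbout_apply]

theorem dist_rotationAbout_center (x : E) (g : unitary (E →L[ℝ] E)) (y : E) :
    dist (rotationAbout x g y) x = dist y x := by
  simpa only [rotationAbout_center] using (rotationAbout x g).dist_eq y x

theorem exists_rotationAbout_eq {x y z : E} (h : dist y x = dist z x) :
    ∃ g, rotationAbout x g y = z := by
  have h' : ‖y - x‖ = ‖z - x‖ := by simpa [dist_eq_norm] using h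
  refine ⟨Unitary.linearIsometryEquiv.symm ((ℝ ∙ ((y - x) - (z - x)))ᗮ.reflection), ?_⟩
  have := Submodule.reflection_sub h'
  rw [rotationAbout_apply]
  change x + ((ℝ ∙ ((y - x) - (z - x)))ᗮ.reflection) (y - x) = z
  rw [this]
  abel

theorem continuous_rotationAbout (x : E) :
    Continuous fun p : unitary (E →L[ℝ] E) × E => rotationAbout x p.1 p.2 := by
  simp only [rotationAbout_apply]
  fun_prop

variable [FiniteDimensional ℝ E]

instance compactSpace_unitary : CompactSpace (unitary (E →L[ℝ] E)) := by
  refine isCompact_iff_compactSpace.mp (Metric.isCompact_of_isClosed_isBounded ?_ ?_)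
  · have : ((unitary (E →L[ℝ] E) : Submonoid (E →L[ℝ] E)) : Set (E →L[ℝ] E)) =
        {g | star g * g = 1} ∩ {g | g * star g = 1} := by
      ext g; exact Unitary.mem_iff
    rw [this]
    exact (isClosed_eq (by fun_prop) continuous_const).inter
      (isClosed_eq (by fun_prop) continuous_const)
  · refine (Metric.isBounded_closedBall (x := (0 : E →L[ℝ] E)) (r := 1)).subset fun g hg => ?_
    rw [mem_closedBall_zero_iff]
    refine ContinuousLinearMap.opNorm_le_bound _ zero_le_one fun y => ?_
    rw [one_mul]
    exact ((Unitary.linearIsometryEquiv ⟨g, hg⟩).norm_map y).le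

variable (E) in
theorem exists_isMulRightInvariant_unitary :
    ∃ μ : Measure (unitary (E →L[ℝ] E)), IsProbabilityMeasure μ ∧ μ.IsMulRightInvariant := by
  let K : TopologicalSpace.PositiveCompacts (unitary (E →L[ℝ] E)) := ⊤
  have hK : IsProbabilityMeasure (Measure.haarMeasure K) :=
    ⟨by simpa [K] using Measure.haarMeasure_self (K₀ := K)⟩
  refine ⟨(Measure.haarMeasure K).inv, ⟨?_⟩, inferInstance⟩
  simp [Measure.inv_apply]

variable [MeasurableSpace E] [BorelSpace E]

/-- The average of `F` over rotations about `x`. -/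
noncomputable def rotationAverage (μ : Measure (unitary (E →L[ℝ] E))) (x : E) (F : E → ℝ≥0∞) (y : E) : ℝ≥0∞ :=
  ∫⁻ g, F (rotationAbout x g y) ∂μ

variable {μ : Measure (unitary (E →L[ℝ] E))} {F : E → ℝ≥0∞}

omit [FiniteDimensional ℝ E] [MeasurableSpace E] [BorelSpace E] in
theorem rotationAverage_center [IsProbabilityMeasure μ] (x : E) :
    rotationAverage μ x F x = F x := by
  simp [rotationAverage, rotationAbout_center]

omit [FiniteDimensional ℝ E] [MeasurableSpace E] [BorelSpace E] in
theorem rotationAverage_congr [μ.IsMulRightInvariant] {x y z : E} (h : dist y x = dist z x) :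
    rotationAverage μ x F y = rotationAverage μ x F z := by
  obtain ⟨g, rfl⟩ := exists_rotationAbout_eq h
  simp_rw [rotationAverage, ← rotationAbout_mul]
  exact (lintegral_mul_right_eq_self (fun g' => F (rotationAbout x g' y)) g).symm

omit [FiniteDimensional ℝ E] in
theorem measurable_comp_rotationAbout (hF : Measurable F) (x y : E) :
    Measurable fun g : unitary (E →L[ℝ] E) => F (rotationAbout x g y) :=
  hF.comp ((continuous_rotationAbout x).comp (by fun_prop : Continuous fun g => (g, y))).measurable

theorem lintegral_sphere_rotationAverage [IsProbabilityMeasure μ] (hF : Measurable F) (d : ℝ)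
    (x y : E) (r : ℝ) (hr : μH[d] (sphere y r) ≠ ∞) :
    ∫⁻ z in sphere y r, rotationAverage μ x F z ∂μH[d] =
      ∫⁻ g, ∫⁻ z in sphere (rotationAbout x g y) r, F z ∂μH[d] ∂μ := by
  have : IsFiniteMeasure ((μH[d] : Measure E).restrict (sphere y r)) :=
    ⟨by rw [Measure.restrict_apply_univ]; exact hr.lt_top⟩
  simp_rw [← lintegral_sphere_comp_isometryEquiv, rotationAverage]
  refine lintegral_lintegral_swap ?_
  exact (hF.comp ((continuous_rotationAbout x).comp continuous_swap).measurable).aemeasurable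

/-- Rotation averages of a function are its spherical means. -/
theorem rotationAverage_mul_hausdorffMeasure [IsProbabilityMeasure μ] [μ.IsMulRightInvariant]
    (hF : Measurable F) (d : ℝ) (x y : E) (hr : μH[d] (sphere x (dist y x)) ≠ ∞) :
    rotationAverage μ x F y * μH[d] (sphere x (dist y x)) =
      ∫⁻ z in sphere x (dist y x), F z ∂μH[d] := by
  have h := lintegral_sphere_rotationAverage (μ := μ) hF d x x _ hr
  simp only [rotationAbout_center, lintegral_const, measure_univ, mul_one] at h
  rw [← h, ← setLIntegral_const]
  exact setLIntegral_congr_fun isClosed_sphere.measurableSet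
    fun z hz => rotationAverage_congr (mem_sphere.mp hz).symm

theorem rotationAverage_submean [IsProbabilityMeasure μ] (hF : Measurable F) (d : ℝ)
    (x : E) {r : ℝ} (hr : ∀ y : E, μH[d] (sphere y r) ≠ ∞)
    (h : ∀ y, F y * μH[d] (sphere y r) ≤ ∫⁻ z in sphere y r, F z ∂μH[d]) (y : E) :
    rotationAverage μ x F y * μH[d] (sphere y r) ≤
      ∫⁻ z in sphere y r, rotationAverage μ x F z ∂μH[d] := by
  rw [lintegral_sphere_rotationAverage hF d x y r (hr y), rotationAverage,
    ← lintegral_mul_const _ (measurable_comp_rotationAbout hF x y)]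
  refine lintegral_mono fun g => ?_
  rw [← hausdorffMeasure_sphere_isometryEquiv d (rotationAbout x g) y r]
  exact h (rotationAbout x g y)

omit [CompleteSpace E] [MeasurableSpace E] [BorelSpace E] in
theorem upperSemicontinuous_exists_bound (hF : UpperSemicontinuous F) (hfin : ∀ y, F y ≠ ∞)
    (x : E) {R : ℝ} (hR : 0 ≤ R) : ∃ C : ℝ≥0∞, C ≠ ∞ ∧ ∀ y ∈ closedBall x R, F y ≤ C := by
  obtain ⟨a, -, h⟩ := (hF.upperSemicontinuousOn (closedBall x R)).exists_isMaxOn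
    (nonempty_closedBall.mpr hR) (isCompact_closedBall x R)
  exact ⟨F a, hfin a, h⟩

theorem limsup_rotationAverage_le [IsProbabilityMeasure μ] (hF : UpperSemicontinuous F)
    (hfin : ∀ y, F y ≠ ∞) (x : E) {R : ℝ} (hR : 0 ≤ R) {u : ℕ → E} {y : E}
    (hu : ∀ n, u n ∈ closedBall x R) (huy : Tendsto u atTop (𝓝 y)) :
    limsup (fun n => rotationAverage μ x F (u n)) atTop ≤ rotationAverage μ x F y := by
  obtain ⟨C, hC, hb⟩ := upperSemicontinuous_exists_bound hF hfin x hR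
  refine (limsup_lintegral_le (fun _ => C) (fun n => measurable_comp_rotationAbout hF.measurable _ _)
    (fun n => Eventually.of_forall fun g => hb _ ?_) (by simpa using hC)).trans
    (lintegral_mono fun g => ?_)
  · rw [mem_closedBall, dist_rotationAbout_center]
    exact hu n
  · have ht : Tendsto (fun n => rotationAbout x g (u n)) atTop (𝓝 (rotationAbout x g y)) :=
      ((rotationAbout x g).continuous.tendsto y).comp huy
    calc limsup (fun n => F (rotationAbout x g (u n))) atTop
        = limsup F (map (fun n => rotationAbout x g (u n)) atTop) := rfl
      _ ≤ limsup F (𝓝 (rotationAbout x g y)) := limsup_le_limsup_of_le ht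
      _ ≤ F (rotationAbout x g y) := hF.limsup_le _

omit [CompleteSpace E] [FiniteDimensional ℝ E] in
theorem lintegral_sphere_norm_sq (d : ℝ) (x y : E) {r δ : ℝ} (hδ : 0 ≤ δ) :
    ∫⁻ z in sphere y r, ENNReal.ofReal (δ * ‖z - x‖ ^ 2) ∂μH[d] =
      ENNReal.ofReal (δ * (‖y - x‖ ^ 2 + r ^ 2)) * μH[d] (sphere y r) := by
  have hm : Measurable fun z : E => ENNReal.ofReal (δ * ‖z - x‖ ^ 2) := by fun_prop
  have h := lintegral_sphere_comp_isometryEquiv d (IsometryEquiv.subLeft ((2 : ℝ) • y))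
    (fun z => ENNReal.ofReal (δ * ‖z - x‖ ^ 2)) y r
  have hy : IsometryEquiv.subLeft ((2 : ℝ) • y) y = y := by
    simp [two_smul]
  rw [hy] at h
  have hsum : ∫⁻ z in sphere y r, (ENNReal.ofReal (δ * ‖z - x‖ ^ 2) +
      ENNReal.ofReal (δ * ‖IsometryEquiv.subLeft ((2 : ℝ) • y) z - x‖ ^ 2)) ∂μH[d] =
      (2 * ENNReal.ofReal (δ * (‖y - x‖ ^ 2 + r ^ 2))) * μH[d] (sphere y r) := by
    rw [← setLIntegral_const]
    refine setLIntegral_congr_fun isClosed_sphere.measurableSet fun z hz => ?_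
    have hz' : ‖z - y‖ = r := mem_sphere_iff_norm.mp hz
    have e1 : z - x = (y - x) + (z - y) := by abel
    have e2 : IsometryEquiv.subLeft ((2 : ℝ) • y) z - x = (y - x) - (z - y) := by
      simp only [IsometryEquiv.subLeft_apply, two_smul]; abel
    have hp := parallelogram_law_with_norm ℝ (y - x) (z - y)
    rw [e2, e1, ← ENNReal.ofReal_add (by positivity) (by positivity),
      show (2 : ℝ≥0∞) = ENNReal.ofReal 2 by simp, ← ENNReal.ofReal_mul (by norm_num), ← hz']
    congr 1
    linear_combination δ * hp
  rw [lintegral_add_left hm, h, ← two_mul, mul_assoc] at hsum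
  exact (ENNReal.mul_right_inj (by simp) (by simp)).mp hsum

/-- A bounded function all of whose sequential limits superior are controlled attains its
maximum on a compact set. -/
theorem exists_forall_le_of_limsup_le {X : Type*} [PseudoMetricSpace X] {s : Set X}
    (hs : IsCompact s) (hne : s.Nonempty) {V : X → ℝ≥0∞}
    (hV : ∀ (u : ℕ → X) (y : X), (∀ n, u n ∈ s) → y ∈ s → Tendsto u atTop (𝓝 y) →
      limsup (fun n => V (u n)) atTop ≤ V y) :
    ∃ y ∈ s, ∀ z ∈ s, V z ≤ V y := by
  obtain ⟨t, -, ht, hmem⟩ := exists_seq_tendsto_sSup (hne.image V) (OrderTop.bddAbove _)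
  choose u hu hut using hmem
  obtain ⟨y, hy, φ, hφ, hlim⟩ := hs.tendsto_subseq hu
  refine ⟨y, hy, fun z hz => (le_sSup (mem_image_of_mem V hz)).trans ?_⟩
  have h1 : Tendsto (fun n => V (u (φ n))) atTop (𝓝 (sSup (V '' s))) := by
    simp_rw [hut]
    exact ht.comp hφ.tendsto_atTop
  rw [← h1.limsup_eq]
  exact hV _ y (fun n => hu _) hy hlim

/-- A uniformly local spherical submean inequality implies the global one. -/
theorem submean_of_locally_submean {d : ℝ}
    (hH : ∀ (y : E) (r : ℝ), 0 < r → μH[d] (sphere y r) ≠ 0 ∧ μH[d] (sphere y r) ≠ ∞)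
    (hF : UpperSemicontinuous F) (hfin : ∀ y, F y ≠ ∞) {ρ : ℝ} (hρ : 0 < ρ)
    (hloc : ∀ (y : E) (r : ℝ), 0 < r → r < ρ →
      F y * μH[d] (sphere y r) ≤ ∫⁻ z in sphere y r, F z ∂μH[d])
    (x : E) {R : ℝ} (hR : 0 < R) :
    F x * μH[d] (sphere x R) ≤ ∫⁻ z in sphere x R, F z ∂μH[d] := by
  obtain ⟨μ, hμ, hμ'⟩ := exists_isMulRightInvariant_unitary E
  obtain ⟨C, hC, hb⟩ := upperSemicontinuous_exists_bound hF hfin x hR.le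
  set W := rotationAverage μ x F with hW
  have hWC : ∀ y ∈ closedBall x R, W y ≤ C := fun y hy => by
    calc W y ≤ ∫⁻ _, C ∂μ := lintegral_mono fun g => hb _ (by
          rw [mem_closedBall, dist_rotationAbout_center]; exact hy)
      _ = C := by simp
  have hmax : ∀ δ : ℝ, 0 < δ → ∃ y, dist y x = R ∧ W x ≤ W y + ENNReal.ofReal (δ * R ^ 2) := by
    intro δ hδ
    set q : E → ℝ≥0∞ := fun y => ENNReal.ofReal (δ * ‖y - x‖ ^ 2) with hq
    have hqc : Continuous q := ENNReal.continuous_ofReal.comp (by fun_prop)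
    have hVG : ∀ y, rotationAverage μ x (fun y => F y + q y) y = W y + q y := fun y => by
      have hqg : ∀ g, q (rotationAbout x g y) = q y := fun g => by
        simp only [hq, ← dist_eq_norm, dist_rotationAbout_center]
      simp_rw [hW, rotationAverage, hqg]
      rw [lintegral_add_right _ measurable_const, lintegral_const, measure_univ, mul_one]
    obtain ⟨y, hy, hmaxy⟩ := exists_forall_le_of_limsup_le (V := fun y => W y + q y)
      (isCompact_closedBall x R) (nonempty_closedBall.mpr hR.le) (by
        intro u y hu hy huy
        simp_rw [← hVG]
        exact limsup_rotationAverage_le (hF.add hqc.upperSemicontinuous)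
          (fun y => ENNReal.add_ne_top.mpr ⟨hfin y, ENNReal.ofReal_ne_top⟩) x hR.le hu huy)
    have hyR : dist y x = R := by
      by_contra hne
      have hlt : dist y x < R := lt_of_le_of_ne (mem_closedBall.mp hy) hne
      obtain ⟨r, hr0, hr⟩ := exists_between (lt_min hρ (sub_pos.mpr hlt))
      have hrρ := hr.trans_le (min_le_left _ _)
      have hrR := hr.trans_le (min_le_right _ _)
      obtain ⟨h0, htop⟩ := hH y r hr0
      have h1 := rotationAverage_submean (μ := μ) hF.measurable d x (fun y => (hH y r hr0).2)
        (fun y => hloc y r hr0 hrρ) y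
      have h2 := lintegral_sphere_norm_sq d x y (r := r) hδ.le
      have h3 : ∫⁻ z in sphere y r, (W z + q z) ∂μH[d] ≤ (W y + q y) * μH[d] (sphere y r) := by
        rw [← setLIntegral_const]
        refine setLIntegral_mono measurable_const fun z hz => hmaxy z ?_
        rw [mem_closedBall]
        linarith [dist_triangle z y x, mem_sphere.mp hz]
      rw [lintegral_add_right _ hqc.measurable, h2, mul_add, ENNReal.ofReal_add (by positivity)
        (by positivity)] at h3
      have h4 : (W y + q y + ENNReal.ofReal (δ * r ^ 2)) * μH[d] (sphere y r) ≤
          (W y + q y) * μH[d] (sphere y r) := by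
        refine le_trans ?_ h3
        rw [add_assoc, add_mul]
        gcongr
      have h5 := (ENNReal.mul_le_mul_iff_left h0 htop).mp h4
      have hfinV : W y + q y ≠ ∞ :=
        ENNReal.add_ne_top.mpr ⟨ne_top_of_le_ne_top hC (hWC y hy), ENNReal.ofReal_ne_top⟩
      have h6 : ENNReal.ofReal (δ * r ^ 2) ≤ 0 :=
        (ENNReal.add_le_add_iff_left hfinV).mp (by simpa using h5)
      have : 0 < δ * r ^ 2 := by positivity
      simp only [nonpos_iff_eq_zero, ENNReal.ofReal_eq_zero] at h6
      linarith
    refine ⟨y, hyR, ?_⟩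
    have := hmaxy x (mem_closedBall_self hR.le)
    refine (le_self_add.trans this).trans ?_
    simp only [hq, ← dist_eq_norm, hyR, le_refl]
  obtain ⟨y₀, hy₀, -⟩ := hmax 1 one_pos
  have hWx : W x ≤ W y₀ := by
    refine ENNReal.le_of_forall_pos_le_add fun ε hε _ => ?_
    obtain ⟨y, hy, hle⟩ := hmax (ε / R ^ 2) (by positivity)
    rw [hW, rotationAverage_congr (y := y₀) (z := y) (by rw [hy, hy₀]), ← hW]
    refine hle.trans_eq ?_
    rw [div_mul_cancel₀ _ (by positivity), ENNReal.ofReal_coe_nnreal]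
  have h := rotationAverage_mul_hausdorffMeasure (μ := μ) hF.measurable d x y₀
    (by rw [hy₀]; exact (hH x R hR).2)
  rw [hy₀] at h
  rw [← h, ← rotationAverage_center (μ := μ) (F := F) x]
  gcongr

end RotationAverage

section SphereMeasure

open scoped ENNReal

/-- The chart of a sphere over a face of the cube, by central projection. -/
noncomputable def cubeFaceChart {m : ℕ} (x : EuclideanSpace ℝ (Fin (m + 1))) (r : ℝ)
    (i : Fin (m + 1)) (s : ℝ) (z : Fin m → ℝ) : EuclideanSpace ℝ (Fin (m + 1)) :=
  x + r • (‖WithLp.toLp 2 (i.insertNth s z : Fin (m + 1) → ℝ)‖⁻¹ •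
    WithLp.toLp 2 (i.insertNth s z : Fin (m + 1) → ℝ))

theorem contDiff_cubeFaceChart {m : ℕ} (x : EuclideanSpace ℝ (Fin (m + 1))) (r : ℝ)
    (i : Fin (m + 1)) {s : ℝ} (hs : s ≠ 0) : ContDiff ℝ 1 (cubeFaceChart x r i s) := by
  have hp : ContDiff ℝ 1 fun z : Fin m → ℝ =>
      WithLp.toLp 2 (i.insertNth s z : Fin (m + 1) → ℝ) := by
    rw [contDiff_euclidean]
    intro j
    refine i.succAboveCases ?_ (fun j => ?_) j
    · simpa using contDiff_const
    · simpa using contDiff_apply ℝ ℝ j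
  have hne : ∀ z : Fin m → ℝ, WithLp.toLp 2 (i.insertNth s z : Fin (m + 1) → ℝ) ≠ 0 := by
    intro z h
    have := congrArg (fun w : EuclideanSpace ℝ (Fin (m + 1)) => w i) h
    simp [hs] at this
  have hn := ((hp.norm ℝ hne).inv fun z => norm_ne_zero_iff.mpr (hne z)).smul hp
  exact contDiff_const.add (hn.const_smul r)

theorem sphere_subset_iUnion_cubeFaceChart {m : ℕ} (x : EuclideanSpace ℝ (Fin (m + 1))) {r : ℝ}
    (hr : 0 < r) :
    sphere x r ⊆ ⋃ i : Fin (m + 1), (cubeFaceChart x r i 1 '' Icc (-1) 1 ∪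
      cubeFaceChart x r i (-1) '' Icc (-1) 1) := by
  intro y hy
  have hyr : ‖y - x‖ = r := mem_sphere_iff_norm.mp hy
  obtain ⟨i, -, hi⟩ := Finset.exists_max_image Finset.univ (fun i => |(y - x) i|)
    Finset.univ_nonempty
  have hpos : 0 < |(y - x) i| := by
    refine abs_pos.mpr fun h0 => ?_
    have : y - x = 0 := by
      ext j
      have := hi j (Finset.mem_univ j)
      rw [h0, abs_zero] at this
      simpa using abs_nonpos_iff.mp this
    rw [this, norm_zero] at hyr
    exact hr.ne hyr
  set t := |(y - x) i| with ht
  have key : ∀ s : ℝ, (y - x) i = t * s →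
      y ∈ cubeFaceChart x r i s '' Icc (-1) 1 := by
    intro s hs
    refine ⟨fun j => (y - x) (i.succAbove j) / t, ?_, ?_⟩
    · have hj := fun j => abs_le.mp (hi (i.succAbove j) (Finset.mem_univ _))
      refine ⟨fun j => ?_, fun j => ?_⟩
      · simp only [Pi.neg_apply, Pi.one_apply]
        rw [le_div_iff₀ hpos, neg_one_mul]
        exact (hj j).1
      · simp only [Pi.one_apply]
        rw [div_le_one hpos]
        exact (hj j).2
    · have hv : WithLp.toLp 2 (i.insertNth s (fun j => (y - x) (i.succAbove j) / t) :
          Fin (m + 1) → ℝ) = t⁻¹ • (y - x) := by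
        ext j
        refine i.succAboveCases ?_ (fun j => ?_) j
        · rw [PiLp.smul_apply, hs]
          simp [hpos.ne']
        · simp [div_eq_inv_mul]
      rw [cubeFaceChart, hv, norm_smul, norm_inv, Real.norm_of_nonneg hpos.le, hyr, smul_smul,
        smul_smul, mul_inv, inv_inv]
      rw [show r * (t * r⁻¹) * t⁻¹ = 1 by field_simp]
      simp
  refine mem_iUnion.mpr ⟨i, ?_⟩
  rcases abs_choice ((y - x) i) with h | h
  · exact Or.inl (key 1 (by rw [ht, h, mul_one]))
  · exact Or.inr (key (-1) (by rw [ht, h]; ring))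

theorem hausdorffMeasure_sphere_ne_top {m : ℕ} (x : EuclideanSpace ℝ (Fin (m + 1))) {r : ℝ}
    (hr : 0 < r) : μH[(m : ℝ)] (sphere x r) ≠ ∞ := by
  have key : ∀ i : Fin (m + 1), ∀ s : ℝ, s ≠ 0 →
      μH[(m : ℝ)] (cubeFaceChart x r i s '' Icc (-1) 1) < ∞ := by
    intro i s hs
    obtain ⟨K, hK⟩ := (contDiff_cubeFaceChart x r i hs).contDiffOn.exists_lipschitzOnWith
      (s := Icc (-1) 1) one_ne_zero (convex_Icc _ _) isCompact_Icc
    refine (hK.hausdorffMeasure_image_le (Nat.cast_nonneg m)).trans_lt ?_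
    have hvol := hausdorffMeasure_pi_real (ι := Fin m)
    rw [Fintype.card_fin] at hvol
    rw [hvol]
    exact ENNReal.mul_lt_top (ENNReal.rpow_lt_top_of_nonneg (Nat.cast_nonneg m) (by simp))
      isCompact_Icc.measure_lt_top
  refine ((measure_mono (sphere_subset_iUnion_cubeFaceChart x hr)).trans_lt ?_).ne
  refine (measure_iUnion_le _).trans_lt ?_
  rw [tsum_fintype, ENNReal.sum_lt_top]
  exact fun i _ => (measure_union_le _ _).trans_lt
    (ENNReal.add_lt_top.mpr ⟨key i 1 one_ne_zero, key i (-1) (by norm_num)⟩)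

theorem hausdorffMeasure_sphere_ne_zero {m : ℕ} (x : EuclideanSpace ℝ (Fin (m + 1))) {r : ℝ}
    (hr : 0 < r) : μH[(m : ℝ)] (sphere x r) ≠ 0 := by
  let p : EuclideanSpace ℝ (Fin (m + 1)) → Fin m → ℝ := fun y j => y j.succ
  have hp : LipschitzWith 1 p := by
    refine LipschitzWith.of_dist_le_mul fun y z => ?_
    rw [NNReal.coe_one, one_mul, dist_pi_le_iff dist_nonneg]
    intro j
    rw [dist_eq_norm, dist_eq_norm]
    exact PiLp.norm_apply_le (y - z) j.succ
  have hsub : ball (p x) (r / (m + 1)) ⊆ p '' sphere x r := by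
    intro z hz
    have hzj : ∀ j, (z j - p x j) ^ 2 ≤ (r / (m + 1)) ^ 2 := fun j => by
      rw [sq_le_sq, abs_of_pos (by positivity : 0 < r / (m + 1)), ← Real.dist_eq]
      exact ((dist_le_pi_dist z (p x) j).trans_lt (mem_ball.mp hz)).le
    have hsum : ∑ j, (z j - p x j) ^ 2 ≤ r ^ 2 := by
      calc ∑ j, (z j - p x j) ^ 2 ≤ ∑ _j : Fin m, (r / (m + 1)) ^ 2 :=
            Finset.sum_le_sum fun j _ => hzj j
        _ = r ^ 2 * (m / (m + 1) ^ 2) := by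
            simp only [Finset.sum_const, Finset.card_univ, Fintype.card_fin, nsmul_eq_mul]
            field_simp
        _ ≤ r ^ 2 * 1 := by
            gcongr
            rw [div_le_one (by positivity)]
            nlinarith [(Nat.cast_nonneg m : (0 : ℝ) ≤ m)]
        _ = r ^ 2 := mul_one _
    refine ⟨WithLp.toLp 2 (Fin.cons (x 0 + √(r ^ 2 - ∑ j, (z j - p x j) ^ 2)) z), ?_, ?_⟩
    · rw [mem_sphere_iff_norm, EuclideanSpace.norm_eq, Fin.sum_univ_succ,
        Real.sqrt_eq_iff_eq_sq (by positivity) hr.le]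
      simp only [PiLp.sub_apply, Fin.cons_zero, Fin.cons_succ, Real.norm_eq_abs, sq_abs,
        add_sub_cancel_left]
      rw [Real.sq_sqrt (by linarith)]
      simp [p]
    · ext j
      simp [p]
  intro h0
  have h := (hp.hausdorffMeasure_image_le (Nat.cast_nonneg m) (sphere x r)).trans_eq
    (by rw [h0, mul_zero])
  have hvol := hausdorffMeasure_pi_real (ι := Fin m)
  rw [Fintype.card_fin] at hvol
  rw [hvol] at h
  exact (measure_ball_pos volume (p x) (by positivity : 0 < r / (m + 1))).not_ge
    ((measure_mono hsub).trans h)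

end SphereMeasure

section Gluing

open scoped ENNReal

theorem le_setAverage_iff_lintegral {X : Type*} [MeasurableSpace X] {μ : Measure X} {s : Set X}
    (h0 : μ s ≠ 0) (hfin : μ s ≠ ∞) {f : X → ℝ} {c : ℝ} (hc : ∀ y, c ≤ f y)
    (hf : IntegrableOn f s μ) (y : X) :
    f y ≤ ⨍ z in s, f z ∂μ ↔
      ENNReal.ofReal (f y - c) * μ s ≤ ∫⁻ z in s, ENNReal.ofReal (f z - c) ∂μ := by
  have hpos : 0 < μ.real s := ENNReal.toReal_pos h0 hfin
  have hci : IntegrableOn (fun _ => c) s μ := integrableOn_const hfin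
  have hnn : 0 ≤ ∫ z in s, (f z - c) ∂μ := integral_nonneg fun z => sub_nonneg.mpr (hc z)
  have hint : IntegrableOn (fun z => f z - c) s μ := hf.sub hci
  rw [← ofReal_integral_eq_lintegral_ofReal hint
      (Eventually.of_forall fun z => sub_nonneg.mpr (hc z)),
    ← ENNReal.ofReal_toReal hfin, ← ENNReal.ofReal_mul (sub_nonneg.mpr (hc y)),
    ENNReal.ofReal_le_ofReal_iff hnn, integral_sub hf hci, setAverage_eq, smul_eq_mul,
    ← div_eq_inv_mul, le_div_iff₀ hpos, setIntegral_const, smul_eq_mul, ← Measure.real, sub_mul]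
  constructor <;> intro h <;> linarith

theorem setAverage_mono_of_integrableOn {X : Type*} [MeasurableSpace X] {μ : Measure X}
    {s : Set X} {f g : X → ℝ} (hf : IntegrableOn f s μ) (hg : IntegrableOn g s μ)
    (h : ∀ y, f y ≤ g y) : ⨍ z in s, f z ∂μ ≤ ⨍ z in s, g z ∂μ := by
  rw [setAverage_eq, setAverage_eq, smul_eq_mul, smul_eq_mul]
  exact mul_le_mul_of_nonneg_left (integral_mono hf hg h) (by positivity)

/-- The truncation of `u` from below at `-n`. -/
noncomputable def truncBelow {E : Type*} (u : E → EReal) (n : ℕ) (y : E) : ℝ :=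
  (u y ⊔ (-(n : ℝ) : EReal)).toReal

theorem coe_truncBelow {E : Type*} {u : E → EReal} {y : E} (hu : u y < ⊤) (n : ℕ) :
    (truncBelow u n y : EReal) = u y ⊔ (-(n : ℝ) : EReal) := by
  have hn : (-((n : ℝ) : EReal)) = ((-(n : ℝ) : ℝ) : EReal) := rfl
  refine EReal.coe_toReal (max_lt hu ?_).ne (lt_of_lt_of_le ?_ le_sup_right).ne'
  · rw [hn]; exact EReal.coe_lt_top _
  · rw [hn]; exact EReal.bot_lt_coe _

theorem neg_le_truncBelow {E : Type*} {u : E → EReal} {y : E} (hu : u y < ⊤) (n : ℕ) :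
    -(n : ℝ) ≤ truncBelow u n y := by
  rw [← EReal.coe_le_coe_iff, coe_truncBelow hu]
  exact le_sup_right

theorem truncBelow_mono {E : Type*} {u w : E → EReal} {y : E} (hw : w y < ⊤) (h : u y ≤ w y)
    (n : ℕ) : truncBelow u n y ≤ truncBelow w n y := by
  rw [← EReal.coe_le_coe_iff, coe_truncBelow hw, coe_truncBelow (h.trans_lt hw)]
  exact sup_le_sup_right h _

theorem upperSemicontinuous_truncBelow {E : Type*} [TopologicalSpace E] {u : E → EReal}
    (hu : UpperSemicontinuous u) (htop : ∀ y, u y < ⊤) (n : ℕ) :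
    UpperSemicontinuous (truncBelow u n) := by
  intro y a ha
  rw [← EReal.coe_lt_coe_iff, coe_truncBelow (htop y), sup_lt_iff] at ha
  filter_upwards [hu y a ha.1] with z hz
  rw [← EReal.coe_lt_coe_iff, coe_truncBelow (htop z), sup_lt_iff]
  exact ⟨hz, ha.2⟩

/-- Extending an upper semicontinuous function by `-∞` off a closed set. -/
theorem UpperSemicontinuousOn.upperSemicontinuous_piecewise_bot {X : Type*} [TopologicalSpace X]
    {C : Set X} [∀ x, Decidable (x ∈ C)] (hC : IsClosed C) {u : X → EReal}
    (hu : UpperSemicontinuousOn u C) : UpperSemicontinuous (C.piecewise u fun _ => ⊥) := by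
  intro y a ha
  have hbot : ⊥ < a := bot_le.trans_lt ha
  by_cases hy : y ∈ C
  · rw [piecewise_eq_of_mem _ _ _ hy] at ha
    filter_upwards [eventually_nhdsWithin_iff.mp (hu y hy a ha)] with z hz
    by_cases hzC : z ∈ C
    · rw [piecewise_eq_of_mem _ _ _ hzC]
      exact hz hzC
    · rwa [piecewise_eq_of_notMem _ _ _ hzC]
  · filter_upwards [hC.isOpen_compl.mem_nhds hy] with z hz
    rwa [piecewise_eq_of_notMem _ _ _ hz]

variable {E : Type*} [NormedAddCommGroup E] [InnerProductSpace ℝ E] [CompleteSpace E]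
  [FiniteDimensional ℝ E] [MeasurableSpace E] [BorelSpace E] {d : ℝ}

omit [CompleteSpace E] in
theorem integrableOn_sphere_of_upperSemicontinuous {f : E → ℝ} (hf : UpperSemicontinuous f)
    {c : ℝ} (hc : ∀ y, c ≤ f y) {x : E} {r : ℝ} (h : μH[d] (sphere x r) ≠ ∞) :
    IntegrableOn f (sphere x r) μH[d] := by
  obtain ⟨M, hM⟩ := (hf.upperSemicontinuousOn (sphere x r)).bddAbove_of_isCompact
    (isCompact_sphere x r)
  refine Measure.integrableOn_of_bounded h hf.measurable.aestronglyMeasurable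
    (M := max |c| |M|) ?_
  filter_upwards [ae_restrict_mem isClosed_sphere.measurableSet] with y hy
  have h1 := hM (mem_image_of_mem f hy)
  rw [Real.norm_eq_abs]
  exact abs_le_max_abs_abs (hc y) h1

theorem le_setAverage_sphere_of_locally
    (hH : ∀ (y : E) (r : ℝ), 0 < r → μH[d] (sphere y r) ≠ 0 ∧ μH[d] (sphere y r) ≠ ∞)
    {f : E → ℝ} (hf : UpperSemicontinuous f) {c : ℝ} (hc : ∀ y, c ≤ f y) {ρ : ℝ} (hρ : 0 < ρ)
    (hloc : ∀ (y : E) (r : ℝ), 0 < r → r < ρ → f y ≤ ⨍ z in sphere y r, f z ∂μH[d])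
    (x : E) {R : ℝ} (hR : 0 < R) : f x ≤ ⨍ z in sphere x R, f z ∂μH[d] := by
  have hint : ∀ (y : E) (r : ℝ), 0 < r → IntegrableOn f (sphere y r) μH[d] := fun y r hr =>
    integrableOn_sphere_of_upperSemicontinuous hf hc (hH y r hr).2
  rw [le_setAverage_iff_lintegral (hH x R hR).1 (hH x R hR).2 hc (hint x R hR)]
  refine submean_of_locally_submean hH (F := fun z => ENNReal.ofReal (f z - c)) ?_
    (fun _ => ENNReal.ofReal_ne_top) hρ (fun y r hr hrρ => ?_) x hR
  · exact (ENNReal.continuous_ofReal.comp (continuous_id.sub continuous_const)).comp_upperSemicontinuous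
      hf (ENNReal.ofReal_mono.comp fun a b hab => sub_le_sub_right hab c)
  · exact (le_setAverage_iff_lintegral (hH y r hr).1 (hH y r hr).2 hc (hint y r hr) y).mp
      (hloc y r hr hrρ)

theorem isSubharmonicOn_univ_of_locally
    (hH : ∀ (y : E) (r : ℝ), 0 < r → μH[d] (sphere y r) ≠ 0 ∧ μH[d] (sphere y r) ≠ ∞)
    {u : E → EReal} (hu : UpperSemicontinuous u) (htop : ∀ y, u y < ⊤) (hbot : ∃ y, u y ≠ ⊥)
    {ρ : ℝ} (hρ : 0 < ρ)
    (hloc : ∀ (n : ℕ) (y : E) (r : ℝ), 0 < r → r < ρ →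
      u y ≤ ((⨍ z in sphere y r, truncBelow u n z ∂μH[d] : ℝ) : EReal)) :
    IsSubharmonicOn d u univ := by
  refine ⟨hu.upperSemicontinuousOn _, fun y _ => htop y, ?_, fun x R hR _ => ?_⟩
  · obtain ⟨y, hy⟩ := hbot
    exact ⟨y, mem_univ y, hy⟩
  refine le_iInf fun n => ?_
  have hc : ∀ y, -(n : ℝ) ≤ truncBelow u n y := fun y => neg_le_truncBelow (htop y) n
  have husc := upperSemicontinuous_truncBelow hu htop n
  have h := le_setAverage_sphere_of_locally hH husc hc hρ
    (fun y r hr hrρ => ?_) x hR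
  · rw [← EReal.coe_le_coe_iff, coe_truncBelow (htop x)] at h
    exact le_sup_left.trans h
  · rw [← EReal.coe_le_coe_iff, coe_truncBelow (htop y)]
    refine sup_le (hloc n y r hr hrρ) ?_
    obtain ⟨h0, hfin⟩ := hH y r hr
    have := setAverage_mono_of_integrableOn (integrableOn_const hfin)
      (integrableOn_sphere_of_upperSemicontinuous husc hc hfin) hc
    rw [setAverage_const h0 hfin] at this
    exact EReal.coe_le_coe_iff.mpr this

omit [CompleteSpace E] in
theorem quadratic_le_setAverage_sphere
    (hH : ∀ (y : E) (r : ℝ), 0 < r → μH[d] (sphere y r) ≠ 0 ∧ μH[d] (sphere y r) ≠ ∞)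
    (ζ : E) (a : ℝ) {K : ℝ} (hK : 0 ≤ K) (y : E) {r : ℝ} (hr : 0 < r) :
    a + K * ‖y - ζ‖ ^ 2 ≤ ⨍ z in sphere y r, (a + K * ‖z - ζ‖ ^ 2) ∂μH[d] := by
  have hc : ∀ y : E, a ≤ a + K * ‖y - ζ‖ ^ 2 := fun y => le_add_of_nonneg_right (by positivity)
  have hcont : Continuous fun y : E => a + K * ‖y - ζ‖ ^ 2 := by fun_prop
  obtain ⟨h0, hfin⟩ := hH y r hr
  rw [le_setAverage_iff_lintegral h0 hfin hc
    (integrableOn_sphere_of_upperSemicontinuous hcont.upperSemicontinuous hc hfin)]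
  simp only [add_sub_cancel_left]
  rw [lintegral_sphere_norm_sq d ζ y hK]
  gcongr
  nlinarith [sq_nonneg r]

theorem quadratic_le_setAverage_truncBelow
    (hH : ∀ (y : E) (r : ℝ), 0 < r → μH[d] (sphere y r) ≠ 0 ∧ μH[d] (sphere y r) ≠ ∞)
    (ζ : E) (a : ℝ) {K : ℝ} (hK : 0 ≤ K) {u : E → EReal} (hu : UpperSemicontinuous u)
    (htop : ∀ y, u y < ⊤) (hle : ∀ y, ((a + K * ‖y - ζ‖ ^ 2 : ℝ) : EReal) ≤ u y) (n : ℕ)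
    (y : E) {r : ℝ} (hr : 0 < r) :
    a + K * ‖y - ζ‖ ^ 2 ≤ ⨍ z in sphere y r, truncBelow u n z ∂μH[d] := by
  have hcont : Continuous fun y : E => a + K * ‖y - ζ‖ ^ 2 := by fun_prop
  refine (quadratic_le_setAverage_sphere hH ζ a hK y hr).trans
    (setAverage_mono_of_integrableOn
      (integrableOn_sphere_of_upperSemicontinuous hcont.upperSemicontinuous
        (fun y => le_add_of_nonneg_right (by positivity)) (hH y r hr).2)
      (integrableOn_sphere_of_upperSemicontinuous (upperSemicontinuous_truncBelow hu htop n)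
        (fun y => neg_le_truncBelow (htop y) n) (hH y r hr).2) fun z => ?_)
  rw [← EReal.coe_le_coe_iff, coe_truncBelow (htop z)]
  exact (hle z).trans le_sup_left

theorem isSubharmonicOn_univ_quadratic
    (hH : ∀ (y : E) (r : ℝ), 0 < r → μH[d] (sphere y r) ≠ 0 ∧ μH[d] (sphere y r) ≠ ∞)
    (ζ : E) (a : ℝ) {K : ℝ} (hK : 0 ≤ K) :
    IsSubharmonicOn d (fun y => ((a + K * ‖y - ζ‖ ^ 2 : ℝ) : EReal)) univ := by
  have hcont : Continuous fun y : E => ((a + K * ‖y - ζ‖ ^ 2 : ℝ) : EReal) :=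
    continuous_coe_real_ereal.comp (by fun_prop)
  exact isSubharmonicOn_univ_of_locally hH hcont.upperSemicontinuous
    (fun y => EReal.coe_lt_top _) ⟨ζ, EReal.coe_ne_bot _⟩ one_pos fun n y r hr _ =>
      EReal.coe_le_coe_iff.mpr (quadratic_le_setAverage_truncBelow hH ζ a hK
        hcont.upperSemicontinuous (fun y => EReal.coe_lt_top _) (fun _ => le_rfl) n y hr)

open Classical in
/-- Gluing a subharmonic function on a ball to a quadratic that dominates it near the
boundary of the ball gives a subharmonic function on the whole space. -/
theorem isSubharmonicOn_univ_glue
    (hH : ∀ (y : E) (r : ℝ), 0 < r → μH[d] (sphere y r) ≠ 0 ∧ μH[d] (sphere y r) ≠ ∞)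
    {Ω : Set E} {v : E → EReal} (hv : IsSubharmonicOn d v Ω) {ζ : E} {ρ : ℝ} (hρ : 0 < ρ)
    (hball : closedBall ζ ρ ⊆ Ω) (a : ℝ) {K : ℝ} (hK : 0 ≤ K)
    (hdom : ∀ y ∈ closedBall ζ ρ, ρ / 2 < dist y ζ →
      v y ≤ ((a + K * ‖y - ζ‖ ^ 2 : ℝ) : EReal)) :
    IsSubharmonicOn d (fun y => (closedBall ζ ρ).piecewise v (fun _ => ⊥) y ⊔
      ((a + K * ‖y - ζ‖ ^ 2 : ℝ) : EReal)) univ := by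
  obtain ⟨husc, htop, -, hmean⟩ := hv
  set v' := (closedBall ζ ρ).piecewise v fun _ => ⊥ with hv'
  set w : E → EReal := fun y => v' y ⊔ ((a + K * ‖y - ζ‖ ^ 2 : ℝ) : EReal) with hw
  have hv'usc : UpperSemicontinuous v' :=
    (husc.mono hball).upperSemicontinuous_piecewise_bot isClosed_closedBall
  have hv'top : ∀ y, v' y < ⊤ := fun y => by
    by_cases hy : y ∈ closedBall ζ ρ
    · rw [hv', piecewise_eq_of_mem _ _ _ hy]
      exact htop y (hball hy)
    · rw [hv', piecewise_eq_of_notMem _ _ _ hy]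
      exact bot_lt_top
  have hcont : Continuous fun y : E => ((a + K * ‖y - ζ‖ ^ 2 : ℝ) : EReal) :=
    continuous_coe_real_ereal.comp (by fun_prop)
  have hwusc : UpperSemicontinuous w := hv'usc.sup hcont.upperSemicontinuous
  have hwtop : ∀ y, w y < ⊤ := fun y => max_lt (hv'top y) (EReal.coe_lt_top _)
  refine isSubharmonicOn_univ_of_locally hH hwusc hwtop
    ⟨ζ, ((EReal.bot_lt_coe _).trans_le le_sup_right).ne'⟩ (half_pos hρ) fun n y r hr hrρ => ?_
  have hq : ((a + K * ‖y - ζ‖ ^ 2 : ℝ) : EReal) ≤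
      ((⨍ z in sphere y r, truncBelow w n z ∂μH[d] : ℝ) : EReal) :=
    EReal.coe_le_coe_iff.mpr (quadratic_le_setAverage_truncBelow hH ζ a hK hwusc hwtop
      (fun _ => le_sup_right) n y hr)
  refine sup_le ?_ hq
  by_cases hy : y ∈ closedBall ζ ρ
  · rcases le_or_gt (dist y ζ) (ρ / 2) with hyd | hyd
    · have hsub : closedBall y r ⊆ closedBall ζ ρ :=
        closedBall_subset_closedBall' (by linarith)
      have hfin := (hH y r hr).2
      rw [hv', piecewise_eq_of_mem _ _ _ hy]
      refine (hmean y r hr (hsub.trans hball)).trans ((iInf_le _ n).trans ?_)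
      rw [EReal.coe_le_coe_iff, setAverage_congr_fun (g := truncBelow v' n)
        isClosed_sphere.measurableSet (Eventually.of_forall fun z hz => by
          rw [truncBelow, hv', piecewise_eq_of_mem _ _ _ (hsub (sphere_subset_closedBall hz))])]
      exact setAverage_mono_of_integrableOn
        (integrableOn_sphere_of_upperSemicontinuous (upperSemicontinuous_truncBelow hv'usc hv'top n)
          (fun y => neg_le_truncBelow (hv'top y) n) hfin)
        (integrableOn_sphere_of_upperSemicontinuous (upperSemicontinuous_truncBelow hwusc hwtop n)
          (fun y => neg_le_truncBelow (hwtop y) n) hfin)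
        fun z => truncBelow_mono (hwtop z) le_sup_left n
    · rw [hv', piecewise_eq_of_mem _ _ _ hy]
      exact (hdom y hy hyd).trans hq
  · rw [hv', piecewise_eq_of_notMem _ _ _ hy]
    exact bot_le

omit [CompleteSpace E] [FiniteDimensional ℝ E] in
theorem isOpen_fineTopology_preimage {u : E → EReal} (hu : IsSubharmonicOn d u univ)
    {s : Set EReal} (hs : IsOpen s) : IsOpen[fineTopology E d] (u ⁻¹' s) :=
  (iInf₂_le u hu : fineTopology E d ≤ _) _ (isOpen_induced hs)

/-- Brelot's criterion, given that spheres have positive finite Hausdorff measure. -/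
theorem thinAt_of_limsup_lt_of_hausdorffMeasure_sphere
    (hH : ∀ (y : E) (r : ℝ), 0 < r → μH[d] (sphere y r) ≠ 0 ∧ μH[d] (sphere y r) ≠ ∞)
    {Ω : Set E} (hΩ : IsOpen Ω) {v : E → EReal} (hv : IsSubharmonicOn d v Ω) {A : Set E}
    {ζ : E} (hζ : ζ ∈ Ω) (hlt : limsup v (𝓝[A \ {ζ}] ζ) < v ζ) : ThinAt d A ζ := by
  classical
  obtain ⟨c, hc, hcv⟩ := EReal.lt_iff_exists_real_btwn.mp hlt
  obtain ⟨ρ, hρ, hball⟩ := nhds_basis_closedBall.mem_iff.mp (hΩ.mem_nhds hζ)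
  obtain ⟨x₀, hx₀, hmax⟩ := (hv.1.mono hball).exists_isMaxOn
    (nonempty_closedBall.mpr hρ.le) (isCompact_closedBall ζ ρ)
  obtain ⟨M, hM, -⟩ := EReal.lt_iff_exists_real_btwn.mp (hv.2.1 x₀ (hball hx₀))
  set K : ℝ := (|M - (c - 1)| + 1) / (ρ / 2) ^ 2 with hK
  have hKpos : 0 < K := by positivity
  have hdom : ∀ y ∈ closedBall ζ ρ, ρ / 2 < dist y ζ →
      v y ≤ ((c - 1 + K * ‖y - ζ‖ ^ 2 : ℝ) : EReal) := by
    intro y hy hyd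
    refine ((hmax hy).trans hM.le).trans (EReal.coe_le_coe_iff.mpr ?_)
    have h1 : K * (ρ / 2) ^ 2 ≤ K * ‖y - ζ‖ ^ 2 := by
      rw [← dist_eq_norm]
      gcongr
    have h2 : K * (ρ / 2) ^ 2 = |M - (c - 1)| + 1 := div_mul_cancel₀ _ (by positivity)
    linarith [le_abs_self (M - (c - 1))]
  have hw := isSubharmonicOn_univ_glue hH hv hρ hball (c - 1) hKpos.le hdom
  have hq := isSubharmonicOn_univ_quadratic hH ζ (c - 1) hKpos.le
  have hqc : Continuous fun y : E => c - 1 + K * ‖y - ζ‖ ^ 2 := by fun_prop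
  have hev : ∀ᶠ y in 𝓝 ζ, (y ∈ A \ {ζ} → v y < c) ∧ c - 1 + K * ‖y - ζ‖ ^ 2 < c :=
    (eventually_nhdsWithin_iff.mp (eventually_lt_of_limsup_lt hc)).and
      (hqc.continuousAt.eventually_lt continuousAt_const (by simp))
  obtain ⟨η, hη, hηball⟩ := Metric.eventually_nhds_iff.mp hev
  have hopen := @IsOpen.inter E (fineTopology E d) _ _
    (isOpen_fineTopology_preimage hw (isOpen_Ioi (a := (c : EReal))))
    (isOpen_fineTopology_preimage hq (isOpen_Iio (a := ((c - 1 + K * η ^ 2 : ℝ) : EReal))))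
  intro hcl
  obtain ⟨y, ⟨hyw, hyq⟩, hyA⟩ := (@mem_closure_iff E (fineTopology E d) _ _).mp hcl _ hopen (by
    refine ⟨hcv.trans_le (le_sup_of_le_left ?_), EReal.coe_lt_coe_iff.mpr ?_⟩
    · rw [piecewise_eq_of_mem _ _ _ (mem_closedBall_self hρ.le)]
    · simp only [sub_self, norm_zero]
      have : 0 < K * η ^ 2 := by positivity
      linarith)
  have hyη : dist y ζ < η := by
    have h1 := EReal.coe_lt_coe_iff.mp hyq
    have h2 : ‖y - ζ‖ ^ 2 < η ^ 2 := lt_of_mul_lt_mul_left (by linarith) hKpos.le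
    rw [dist_eq_norm]
    exact lt_of_pow_lt_pow_left₀ 2 hη.le h2
  obtain ⟨hyv, hyc⟩ := hηball hyη
  refine (mem_Ioi.mp hyw).not_gt (max_lt ?_ (EReal.coe_lt_coe_iff.mpr hyc))
  by_cases hy : y ∈ closedBall ζ ρ
  · rw [piecewise_eq_of_mem _ _ _ hy]
    exact hyv hyA
  · rw [piecewise_eq_of_notMem _ _ _ hy]
    exact EReal.bot_lt_coe _

end Gluing

/-- Brelot's criterion—if a subharmonic function has a limsup
along `E` at `ζ` strictly smaller than its value at `ζ`, then `E` is thin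
at `ζ`. -/
theorem thin_of_limsup_lt
    (N : ℕ) (hN : 2 ≤ N) (Ω : Set (EuclideanSpace ℝ (Fin N))) (hΩopen : IsOpen Ω)
    (v : EuclideanSpace ℝ (Fin N) → EReal)
    (hv : IsSubharmonicOn ((N : ℝ) - 1) v Ω)
    (A : Set (EuclideanSpace ℝ (Fin N))) (hA : A ⊆ Ω)
    (ζ : EuclideanSpace ℝ (Fin N)) (hζΩ : ζ ∈ Ω)
    (hlim : ζ ∈ closure (A \ {ζ}))
    (hlt : Filter.limsup v (nhdsWithin ζ (A \ {ζ})) < v ζ) :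
    ThinAt ((N : ℝ) - 1) A ζ := by
  obtain ⟨m, rfl⟩ : ∃ m, N = m + 1 := ⟨N - 1, by omega⟩
  have hd : ((m + 1 : ℕ) : ℝ) - 1 = m := by push_cast; ring
  rw [hd] at hv ⊢
  exact thinAt_of_limsup_lt_of_hausdorffMeasure_sphere
    (fun y r hr => ⟨hausdorffMeasure_sphere_ne_zero y hr, hausdorffMeasure_sphere_ne_top y hr⟩)
    hΩopen hv hζΩ hlt
end

section
/- Let K be a compact subset of ℝ^N with empty interior such that ℝ^N \ K is nowhere thin. Then for each continuous function f on K and each ε > 0 there exists a function h harmonic on an open neighborhood of K such that |f(x) − h(x)| < ε for all x ∈ K. -/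
open MeasureTheory Metric Filter Topology Set

/-- The radial profile of the fundamental solution, as a function of the squared distance:
`q ^ (1 - ν) / (ν - 1)`, or `-log q` in the critical case `ν = 1`. -/
noncomputable def newtonProfile (ν q : ℝ) : ℝ :=
  if ν = 1 then -Real.log q else q ^ (1 - ν) / (ν - 1)

theorem hasDerivAt_newtonProfile (ν : ℝ) {q : ℝ} (hq : 0 < q) :
    HasDerivAt (newtonProfile ν) (-(q ^ (-ν))) q := by
  by_cases h : ν = 1
  · have : newtonProfile ν = fun q => -Real.log q := by ext q; simp [newtonProfile, h]
    rw [this, h, Real.rpow_neg_one]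
    exact (Real.hasDerivAt_log hq.ne').neg
  · have : newtonProfile ν = fun q => q ^ (1 - ν) / (ν - 1) := by ext q; simp [newtonProfile, h]
    rw [this]
    have h1 : ν - 1 ≠ 0 := sub_ne_zero.2 h
    refine ((Real.hasDerivAt_rpow_const (p := 1 - ν) (Or.inl hq.ne')).div_const
      (ν - 1)).congr_deriv ?_
    rw [show 1 - ν - 1 = -ν by ring]
    field_simp
    ring

theorem continuousOn_newtonProfile (ν : ℝ) : ContinuousOn (newtonProfile ν) (Ioi 0) :=
  fun _ hq => (hasDerivAt_newtonProfile ν hq).continuousAt.continuousWithinAt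

theorem strictAntiOn_newtonProfile (ν : ℝ) : StrictAntiOn (newtonProfile ν) (Ioi 0) := by
  apply strictAntiOn_of_deriv_neg (convex_Ioi 0) (continuousOn_newtonProfile ν)
  intro q hq
  rw [interior_Ioi] at hq
  rw [(hasDerivAt_newtonProfile ν hq).deriv]
  have := Real.rpow_pos_of_pos (mem_Ioi.1 hq) (-ν)
  linarith

section Parametric

variable {E : Type*} [TopologicalSpace E] [T2Space E] [MeasurableSpace E] [BorelSpace E]

theorem integrable_of_continuousOn_of_ae_mem {σ : Measure E} [IsFiniteMeasure σ]
    {B : Set E} (hB : IsCompact B) (hσ : ∀ᵐ y ∂σ, y ∈ B) {f : E → ℝ} (hf : ContinuousOn f B) :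
    Integrable f σ := by
  rw [← Measure.restrict_eq_self_of_ae_mem hσ]
  exact hf.integrableOn_compact hB

theorem hasDerivAt_integral_of_continuousOn {σ : Measure E} [IsFiniteMeasure σ]
    {B : Set E} (hB : IsCompact B) (hσ : ∀ᵐ y ∂σ, y ∈ B) {s : Set ℝ} {t₀ : ℝ} (hs : s ∈ 𝓝 t₀)
    {f f' : ℝ → E → ℝ} (hf : ∀ t ∈ s, ContinuousOn (f t) B)
    (hf' : ContinuousOn (Function.uncurry f') (s ×ˢ B))
    (hd : ∀ t ∈ s, ∀ y ∈ B, HasDerivAt (fun t => f t y) (f' t y) t) :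
    HasDerivAt (fun t => ∫ y, f t y ∂σ) (∫ y, f' t₀ y ∂σ) t₀ := by
  obtain ⟨k, hk, hks, hkc⟩ := local_compact_nhds hs
  obtain ⟨C, hC⟩ := (hkc.prod hB).exists_bound_of_continuousOn
    (hf'.mono (prod_mono hks subset_rfl))
  refine (hasDerivAt_integral_of_dominated_loc_of_deriv_le (bound := fun _ => C) hk ?_ ?_ ?_ ?_
    (integrable_const C) ?_).2
  · filter_upwards [hs] with t ht
    exact (integrable_of_continuousOn_of_ae_mem hB hσ (hf t ht)).aestronglyMeasurable
  · exact integrable_of_continuousOn_of_ae_mem hB hσ (hf t₀ (mem_of_mem_nhds hs))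
  · refine (integrable_of_continuousOn_of_ae_mem hB hσ ?_).aestronglyMeasurable
    exact hf'.comp (f := fun y => (t₀, y)) (by fun_prop)
      fun y hy => ⟨mem_of_mem_nhds hs, hy⟩
  · filter_upwards [hσ] with y hy t ht
    exact hC (t, y) ⟨ht, hy⟩
  · filter_upwards [hσ] with y hy t ht
    exact hd t (hks ht) y hy

end Parametric

theorem sub_ne_zero_of_norm_lt_of_mem_sphere {E : Type*} [NormedAddCommGroup E] {x y : E}
    {r : ℝ} (hx : ‖x‖ < r) (hy : y ∈ sphere (0 : E) r) : x - y ≠ 0 := by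
  rintro h
  rw [sub_eq_zero.1 h, mem_sphere_zero_iff_norm.1 hy] at hx
  exact lt_irrefl _ hx

section Potential

variable {E : Type*} [NormedAddCommGroup E] [InnerProductSpace ℝ E]

theorem hasDerivAt_norm_sq_line (x v y : E) (t : ℝ) :
    HasDerivAt (fun t : ℝ => ‖x + t • v - y‖ ^ 2) (2 * inner ℝ (x + t • v - y) v) t := by
  have h : HasDerivAt (fun t : ℝ => x + t • v - y) v t := by
    simpa using (((hasDerivAt_id t).smul_const v).const_add x).sub_const y
  exact h.norm_sq

theorem hasDerivAt_newtonProfile_line (ν : ℝ) {x v y : E} {t : ℝ} (h : x + t • v - y ≠ 0) :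
    HasDerivAt (fun t : ℝ => newtonProfile ν (‖x + t • v - y‖ ^ 2))
      (-2 * inner ℝ (x + t • v - y) v * (‖x + t • v - y‖ ^ 2) ^ (-ν)) t := by
  have hq : 0 < ‖x + t • v - y‖ ^ 2 := by positivity
  refine ((hasDerivAt_newtonProfile ν hq).comp t (hasDerivAt_norm_sq_line x v y t)).congr_deriv ?_
  ring

theorem hasDerivAt_newtonProfile_line_second (ν : ℝ) {x v y : E} {t : ℝ}
    (h : x + t • v - y ≠ 0) :
    HasDerivAt (fun t : ℝ => -2 * inner ℝ (x + t • v - y) v * (‖x + t • v - y‖ ^ 2) ^ (-ν))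
      (-2 * ‖v‖ ^ 2 * (‖x + t • v - y‖ ^ 2) ^ (-ν) +
        4 * ν * inner ℝ (x + t • v - y) v ^ 2 * (‖x + t • v - y‖ ^ 2) ^ (-ν - 1)) t := by
  have hq : 0 < ‖x + t • v - y‖ ^ 2 := by positivity
  have h1 : HasDerivAt (fun t : ℝ => inner ℝ (x + t • v - y) v) (‖v‖ ^ 2) t := by
    have h : HasDerivAt (fun t : ℝ => x + t • v - y) v t := by
      simpa using (((hasDerivAt_id t).smul_const v).const_add x).sub_const y
    simpa using h.inner ℝ (hasDerivAt_const t v)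
  have h2 : HasDerivAt (fun t : ℝ => (‖x + t • v - y‖ ^ 2) ^ (-ν))
      (-ν * (‖x + t • v - y‖ ^ 2) ^ (-ν - 1) * (2 * inner ℝ (x + t • v - y) v)) t :=
    HasDerivAt.comp (h₂ := fun q : ℝ => q ^ (-ν)) t
      (Real.hasDerivAt_rpow_const (Or.inl hq.ne')) (hasDerivAt_norm_sq_line x v y t)
  refine ((h1.const_mul (-2)).mul h2).congr_deriv ?_
  ring

section Interior

variable [FiniteDimensional ℝ E] [MeasurableSpace E] [BorelSpace E]

variable (ν : ℝ) {σ : Measure E} [IsFiniteMeasure σ] {r : ℝ}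

theorem hasDerivAt_newtonPotential_line (hσ : ∀ᵐ y ∂σ, y ∈ sphere (0 : E) r) {x v : E} {t : ℝ}
    (h : ‖x + t • v‖ < r) :
    HasDerivAt (fun t : ℝ => ∫ y, newtonProfile ν (‖x + t • v - y‖ ^ 2) ∂σ)
      (∫ y, -2 * inner ℝ (x + t • v - y) v * (‖x + t • v - y‖ ^ 2) ^ (-ν) ∂σ) t := by
  have hs : {t : ℝ | ‖x + t • v‖ < r} ∈ 𝓝 t :=
    (isOpen_lt (by fun_prop) continuous_const).mem_nhds h
  refine hasDerivAt_integral_of_continuousOn (isCompact_sphere 0 r) hσ hs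
    (f' := fun t y => -2 * inner ℝ (x + t • v - y) v * (‖x + t • v - y‖ ^ 2) ^ (-ν)) ?_ ?_ ?_
  · intro t ht
    refine (continuousOn_newtonProfile ν).comp (by fun_prop) fun y hy => ?_
    have := sub_ne_zero_of_norm_lt_of_mem_sphere ht hy
    simp only [mem_Ioi]; positivity
  · refine ContinuousOn.mul (by fun_prop) (ContinuousOn.rpow_const (by fun_prop) ?_)
    rintro ⟨t, y⟩ ⟨ht, hy⟩
    have := sub_ne_zero_of_norm_lt_of_mem_sphere ht hy
    left; positivity
  · intro t ht y hy
    exact hasDerivAt_newtonProfile_line ν (sub_ne_zero_of_norm_lt_of_mem_sphere ht hy)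

theorem hasDerivAt_newtonPotential_line_second (hσ : ∀ᵐ y ∂σ, y ∈ sphere (0 : E) r) {x v : E}
    {t : ℝ} (h : ‖x + t • v‖ < r) :
    HasDerivAt (fun t : ℝ =>
        ∫ y, -2 * inner ℝ (x + t • v - y) v * (‖x + t • v - y‖ ^ 2) ^ (-ν) ∂σ)
      (∫ y, (-2 * ‖v‖ ^ 2 * (‖x + t • v - y‖ ^ 2) ^ (-ν) +
        4 * ν * inner ℝ (x + t • v - y) v ^ 2 * (‖x + t • v - y‖ ^ 2) ^ (-ν - 1)) ∂σ) t := by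
  have hs : {t : ℝ | ‖x + t • v‖ < r} ∈ 𝓝 t :=
    (isOpen_lt (by fun_prop) continuous_const).mem_nhds h
  have key : ∀ p : ℝ, ContinuousOn (fun z : ℝ × E => (‖x + z.1 • v - z.2‖ ^ 2) ^ p)
      ({t : ℝ | ‖x + t • v‖ < r} ×ˢ sphere (0 : E) r) := fun p => by
    refine ContinuousOn.rpow_const (by fun_prop) ?_
    rintro ⟨t, y⟩ ⟨ht, hy⟩
    have := sub_ne_zero_of_norm_lt_of_mem_sphere ht hy
    left; positivity
  refine hasDerivAt_integral_of_continuousOn (isCompact_sphere 0 r) hσ hs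
    (f' := fun t y => (-2 * ‖v‖ ^ 2 * (‖x + t • v - y‖ ^ 2) ^ (-ν) +
        4 * ν * inner ℝ (x + t • v - y) v ^ 2 * (‖x + t • v - y‖ ^ 2) ^ (-ν - 1))) ?_ ?_ ?_
  · intro t ht
    refine ContinuousOn.mul (by fun_prop) ?_
    exact (key (-ν)).comp (f := fun y => (t, y)) (by fun_prop) fun y hy => ⟨ht, hy⟩
  · exact (ContinuousOn.mul (by fun_prop) (key _)).add (ContinuousOn.mul (by fun_prop) (key _))
  · intro t ht y hy
    exact hasDerivAt_newtonProfile_line_second ν (sub_ne_zero_of_norm_lt_of_mem_sphere ht hy)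

/-- The Newtonian potential of a measure on a sphere is harmonic inside the sphere. -/
theorem sum_second_deriv_newtonPotential_eq_zero (hσ : ∀ᵐ y ∂σ, y ∈ sphere (0 : E) r)
    (hν : 2 * ν = Module.finrank ℝ E) {x : E} (h : ‖x‖ < r) :
    ∑ i, ∫ y, (-2 * ‖stdOrthonormalBasis ℝ E i‖ ^ 2 * (‖x - y‖ ^ 2) ^ (-ν) +
        4 * ν * inner ℝ (x - y) (stdOrthonormalBasis ℝ E i) ^ 2 *
          (‖x - y‖ ^ 2) ^ (-ν - 1)) ∂σ = 0 := by
  have key : ∀ p : ℝ, ContinuousOn (fun y : E => (‖x - y‖ ^ 2) ^ p) (sphere (0 : E) r) :=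
      fun p => by
    refine ContinuousOn.rpow_const (by fun_prop) ?_
    intro y hy
    have := sub_ne_zero_of_norm_lt_of_mem_sphere h hy
    left; positivity
  rw [← integral_finsetSum]
  · rw [integral_eq_zero_of_ae]
    filter_upwards [hσ] with y hy
    have h0 := sub_ne_zero_of_norm_lt_of_mem_sphere h hy
    have hq : 0 < ‖x - y‖ ^ 2 := by positivity
    rw [Finset.sum_add_distrib, ← Finset.sum_mul, ← Finset.sum_mul, ← Finset.mul_sum,
      ← Finset.mul_sum, OrthonormalBasis.sum_sq_inner_left]
    simp only [OrthonormalBasis.norm_eq_one, Finset.sum_const, Finset.card_univ, Fintype.card_fin]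
    rw [Real.rpow_sub_one hq.ne', nsmul_eq_mul, ← hν, Pi.zero_apply]
    field_simp
    ring
  · intro i _
    refine integrable_of_continuousOn_of_ae_mem (isCompact_sphere 0 r) hσ ?_
    exact (ContinuousOn.mul (by fun_prop) (key _)).add (ContinuousOn.mul (by fun_prop) (key _))

end Interior

end Potential

section Radial

variable {E : Type*} [NormedAddCommGroup E] [InnerProductSpace ℝ E]

theorem exists_linearIsometryEquiv_apply_eq [CompleteSpace E] {v w : E} (h : ‖v‖ = ‖w‖) :
    ∃ R : E ≃ₗᵢ[ℝ] E, R v = w :=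
  ⟨Submodule.reflection (ℝ ∙ (v - w))ᗮ, Submodule.reflection_sub h⟩

variable [MeasurableSpace E] [BorelSpace E]

/-- Invariance of a measure under all linear isometries. -/
def IsRotationInvariant (σ : Measure E) : Prop :=
  ∀ R : E ≃ₗᵢ[ℝ] E, MeasurePreserving R σ σ

theorem IsRotationInvariant.integral_comp_norm_sub [CompleteSpace E] {σ : Measure E}
    (hσ : IsRotationInvariant σ) (g : ℝ → ℝ) {x x' : E} (h : ‖x‖ = ‖x'‖) :
    ∫ y, g ‖x - y‖ ∂σ = ∫ y, g ‖x' - y‖ ∂σ := by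
  obtain ⟨R, rfl⟩ := exists_linearIsometryEquiv_apply_eq h
  rw [← (hσ R).integral_comp R.toHomeomorph.measurableEmbedding (fun y => g ‖R x - y‖)]
  simp [← map_sub]

end Radial

theorem hasDerivAt_mul_of_continuousAt {k : ℝ → ℝ} (hk : ContinuousAt k 0) :
    HasDerivAt (fun t => k t * t) (k 0) 0 := by
  rw [hasDerivAt_iff_tendsto_slope]
  refine (hk.tendsto.mono_left nhdsWithin_le_nhds).congr' ?_
  filter_upwards [self_mem_nhdsWithin] with t ht
  have : t ≠ 0 := ht
  simp [slope_def_field, this]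

/-- A function on an interval `(-r, r)` solving the radial Laplace equation
`s u'' + (n - 1) u' = 0` for `s > 0` is constant on `[0, r)`. -/
theorem eq_of_radial_laplace {n : ℕ} (hn : 2 ≤ n) {r : ℝ} {u u₁ u₂ : ℝ → ℝ}
    (h₁ : ∀ s, |s| < r → HasDerivAt u (u₁ s) s) (h₂ : ∀ s, |s| < r → HasDerivAt u₁ (u₂ s) s)
    (h : ∀ s, 0 < s → s < r → s * u₂ s + (n - 1) * u₁ s = 0) {s : ℝ} (hs : 0 ≤ s) (hsr : s < r) :
    u s = u 0 := by
  obtain ⟨m, rfl⟩ : ∃ m, n = m + 2 := ⟨n - 2, by omega⟩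
  have abs_lt' : ∀ t, 0 ≤ t → t < r → |t| < r := fun t h0 hr => by rwa [abs_of_nonneg h0]
  have hu₁ : ∀ s, 0 < s → s < r → u₁ s = 0 := by
    intro s hs hsr
    have hd : ∀ t, |t| < r → HasDerivAt (fun t => t ^ (m + 1) * u₁ t)
        ((m + 1 : ℕ) * t ^ m * u₁ t + t ^ (m + 1) * u₂ t) t := fun t ht => by
      simpa using (hasDerivAt_pow (m + 1) t).fun_mul (h₂ t ht)
    obtain ⟨c, hc, hc'⟩ := exists_hasDerivAt_eq_slope (fun t => t ^ (m + 1) * u₁ t) _ hs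
      (fun t ht => (hd t (abs_lt' t ht.1 (ht.2.trans_lt hsr))).continuousAt.continuousWithinAt)
      (fun t ht => hd t (abs_lt' t ht.1.le (ht.2.trans hsr)))
    have h0 := h c hc.1 (hc.2.trans hsr)
    push_cast at h0 hc'
    have : ((m : ℝ) + 1) * c ^ m * u₁ c + c ^ (m + 1) * u₂ c = 0 := by
      linear_combination c ^ m * h0
    rw [this, eq_comm, div_eq_zero_iff] at hc'
    simpa [hs.ne'] using hc'
  rcases hs.eq_or_lt with rfl | hs
  · rfl
  obtain ⟨c, hc, hc'⟩ := exists_hasDerivAt_eq_slope u u₁ hs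
      (fun t ht => (h₁ t (abs_lt' t ht.1 (ht.2.trans_lt hsr))).continuousAt.continuousWithinAt)
      (fun t ht => h₁ t (abs_lt' t ht.1.le (ht.2.trans hsr)))
  rw [hu₁ c hc.1 (hc.2.trans hsr), eq_comm, div_eq_zero_iff] at hc'
  rcases hc' with hc' | hc' <;> linarith

section Interior

variable {E : Type*} [NormedAddCommGroup E] [InnerProductSpace ℝ E] [FiniteDimensional ℝ E]
  [MeasurableSpace E] [BorelSpace E]

/-- The Newtonian potential of a rotation-invariant measure on a sphere is constant inside the
sphere. -/
theorem IsRotationInvariant.newtonPotential_interior {ν : ℝ} (hν : 2 * ν = Module.finrank ℝ E)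
    (hn : 2 ≤ Module.finrank ℝ E) {σ : Measure E} [IsFiniteMeasure σ]
    (hinv : IsRotationInvariant σ) {r : ℝ} (hσ : ∀ᵐ y ∂σ, y ∈ sphere (0 : E) r) {x : E}
    (hx : ‖x‖ < r) :
    ∫ y, newtonProfile ν (‖x - y‖ ^ 2) ∂σ = σ.real univ * newtonProfile ν (r ^ 2) := by
  set b := stdOrthonormalBasis ℝ E
  let i₀ : Fin (Module.finrank ℝ E) := ⟨0, by omega⟩
  set e : E := b i₀ with he_def
  have he : ‖e‖ = 1 := b.norm_eq_one i₀
  set u : ℝ → ℝ := fun s => ∫ y, newtonProfile ν (‖0 + s • e - y‖ ^ 2) ∂σ with hu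
  have hFu : ∀ z : E, ∫ y, newtonProfile ν (‖z - y‖ ^ 2) ∂σ = u ‖z‖ := fun z =>
    hinv.integral_comp_norm_sub (fun t => newtonProfile ν (t ^ 2))
      (by simp [norm_smul, he])
  set D : E → E → ℝ := fun v z => ∫ y, -2 * inner ℝ (z - y) v * (‖z - y‖ ^ 2) ^ (-ν) ∂σ with hD
  set D2 : E → E → ℝ := fun v z => ∫ y, (-2 * ‖v‖ ^ 2 * (‖z - y‖ ^ 2) ^ (-ν) +
        4 * ν * inner ℝ (z - y) v ^ 2 * (‖z - y‖ ^ 2) ^ (-ν - 1)) ∂σ with hD2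
  have h₁ : ∀ s, |s| < r → HasDerivAt u (D e (0 + s • e)) s := fun s hs =>
    hasDerivAt_newtonPotential_line ν hσ (by simpa [norm_smul, he] using hs)
  have h₂ : ∀ s, |s| < r → HasDerivAt (fun s => D e (0 + s • e)) (D2 e (0 + s • e)) s :=
    fun s hs => hasDerivAt_newtonPotential_line_second ν hσ (by simpa [norm_smul, he] using hs)
  have htrans : ∀ s, 0 < s → s < r → ∀ i, i ≠ i₀ →
      s * D2 (b i) (0 + s • e) = D e (0 + s • e) := by
    intro s hs hsr i hi
    have hnorm : ∀ t : ℝ, ‖(0 + s • e) + t • b i‖ = √(s ^ 2 + t ^ 2) := fun t => by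
      rw [eq_comm, Real.sqrt_eq_iff_mul_self_eq (by positivity) (by positivity), ← sq,
        norm_add_sq_real, zero_add, inner_smul_left, inner_smul_right, he_def,
        b.inner_eq_zero hi.symm]
      simp [norm_smul]
    have hcont : Continuous fun t : ℝ => √(s ^ 2 + t ^ 2) := by fun_prop
    have hpos : ∀ t : ℝ, 0 < √(s ^ 2 + t ^ 2) := fun t => by positivity
    have h0 : √(s ^ 2 + 0 ^ 2) = s := by simp [hs.le]
    have hnear : ∀ᶠ t in 𝓝 (0 : ℝ), √(s ^ 2 + t ^ 2) < r :=
      hcont.continuousAt.eventually_lt continuousAt_const (by simpa [hs.le] using hsr)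
    have hDi : ∀ t, √(s ^ 2 + t ^ 2) < r → D (b i) ((0 + s • e) + t • b i) =
        D e (0 + √(s ^ 2 + t ^ 2) • e) / √(s ^ 2 + t ^ 2) * t := by
      intro t ht
      have hA := hasDerivAt_newtonPotential_line ν hσ (x := 0 + s • e) (v := b i) (t := t)
        (by rwa [hnorm])
      have hsq : HasDerivAt (fun t : ℝ => √(s ^ 2 + t ^ 2)) (t / √(s ^ 2 + t ^ 2)) t := by
        refine (((hasDerivAt_pow 2 t).const_add (s ^ 2)).sqrt (by positivity)).congr_deriv ?_
        simp; field_simp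
      have hB := (h₁ (√(s ^ 2 + t ^ 2)) (by rwa [abs_of_pos (hpos t)])).comp t hsq
      have hAB : (fun t : ℝ => ∫ y, newtonProfile ν (‖0 + s • e + t • b i - y‖ ^ 2) ∂σ) =
          u ∘ fun t => √(s ^ 2 + t ^ 2) := by
        ext t; rw [hFu, hnorm]; rfl
      rw [hAB] at hA
      exact (hA.unique hB).trans (by ring)
    have hC := hasDerivAt_newtonPotential_line_second ν hσ (x := 0 + s • e) (v := b i) (t := 0)
      (by rw [hnorm]; simpa [hs.le] using hsr)
    have hk : ContinuousAt (fun t => D e (0 + √(s ^ 2 + t ^ 2) • e) / √(s ^ 2 + t ^ 2)) 0 := by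
      refine ContinuousAt.div ?_ hcont.continuousAt (hpos 0).ne'
      refine ContinuousAt.comp (g := fun s => D e (0 + s • e)) ?_ hcont.continuousAt
      rw [h0]
      exact (h₂ s (by rwa [abs_of_pos hs])).continuousAt
    have hE := hasDerivAt_mul_of_continuousAt hk
    have hC' := hE.congr_of_eventuallyEq (hnear.mono hDi)
    have := hC.unique hC'
    rw [h0] at this
    simp only [zero_smul, add_zero (0 + s • e)] at this
    rw [hD2]
    simp only [this]
    field_simp
  have hode : ∀ s, 0 < s → s < r →
      s * D2 e (0 + s • e) + ((Module.finrank ℝ E : ℕ) - 1) * D e (0 + s • e) = 0 := by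
    intro s hs hsr
    have hsum : ∑ i, D2 (b i) (0 + s • e) = 0 :=
      sum_second_deriv_newtonPotential_eq_zero ν hσ hν
        (by simpa [norm_smul, he, abs_of_pos hs] using hsr)
    have h3 : s * ∑ i, D2 (b i) (0 + s • e) = 0 := by rw [hsum, mul_zero]
    rw [Finset.mul_sum, ← Finset.add_sum_erase _ _ (Finset.mem_univ i₀),
      Finset.sum_congr rfl fun i hi => htrans s hs hsr i (Finset.ne_of_mem_erase hi),
      Finset.sum_const, Finset.card_erase_of_mem (Finset.mem_univ _), nsmul_eq_mul] at h3
    simpa [Nat.cast_sub (show 1 ≤ Module.finrank ℝ E by omega)] using h3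
  rw [hFu, eq_of_radial_laplace hn h₁ h₂ hode (norm_nonneg x) hx]
  change ∫ y, newtonProfile ν (‖(0 : E) + (0 : ℝ) • e - y‖ ^ 2) ∂σ = _
  rw [integral_congr_ae (g := fun _ => newtonProfile ν (r ^ 2))]
  · simp
  · filter_upwards [hσ] with y hy
    simp [mem_sphere_zero_iff_norm.1 hy]

end Interior

section SphereMeasure

variable {E : Type*} [NormedAddCommGroup E] [InnerProductSpace ℝ E]

theorem coe_orthogonalProjectionOnto_orthogonal_unit {e : E} (he : ‖e‖ = 1) (y : E) :
    (((ℝ ∙ e)ᗮ.orthogonalProjectionOnto y : (ℝ ∙ e)ᗮ) : E) = y - inner ℝ e y • e := by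
  rw [Submodule.coe_orthogonalProjectionOnto_apply, Submodule.starProjection_orthogonal_val,
    Submodule.starProjection_unit_singleton ℝ he]

theorem norm_sq_orthogonalProjectionOnto_orthogonal_unit {e : E} (he : ‖e‖ = 1) (y : E) :
    ‖(ℝ ∙ e)ᗮ.orthogonalProjectionOnto y‖ ^ 2 = ‖y‖ ^ 2 - inner ℝ e y ^ 2 := by
  rw [Submodule.coe_norm, coe_orthogonalProjectionOnto_orthogonal_unit he, norm_sub_sq_real,
    inner_smul_right, norm_smul, he, real_inner_comm, mul_one, Real.norm_eq_abs, sq_abs]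
  ring

theorem finrank_orthogonal_unit [FiniteDimensional ℝ E] {e : E} (he : ‖e‖ = 1) :
    (Module.finrank ℝ (ℝ ∙ e)ᗮ : ℝ) = Module.finrank ℝ E - 1 := by
  have h0 : e ≠ 0 := by rintro rfl; simp at he
  have h := (ℝ ∙ e).finrank_add_finrank_orthogonal
  rw [finrank_span_singleton h0] at h
  rw [← h]; push_cast; ring

variable [MeasurableSpace E] [BorelSpace E]

variable (E) in
/-- The surface measure on the sphere of radius `r` centered at the origin. -/
noncomputable def surfaceMeasure (r : ℝ) : Measure E :=
  μH[(Module.finrank ℝ E : ℝ) - 1].restrict (sphere (0 : E) r)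

theorem ae_mem_surfaceMeasure (r : ℝ) : ∀ᵐ y ∂(surfaceMeasure E r), y ∈ sphere (0 : E) r :=
  ae_restrict_mem isClosed_sphere.measurableSet

theorem isRotationInvariant_surfaceMeasure (r : ℝ) : IsRotationInvariant (surfaceMeasure E r) := by
  intro R
  have h := (R.toIsometryEquiv.measurePreserving_hausdorffMeasure
    ((Module.finrank ℝ E : ℝ) - 1)).restrict_preimage
    (isClosed_sphere (x := (0 : E)) (ε := r)).measurableSet
  have h2 : R.toIsometryEquiv ⁻¹' sphere (0 : E) r = sphere 0 r := by
    ext y; simp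
  rwa [h2] at h

theorem setIntegral_sphere_eq_surfaceMeasure (x : E) (r : ℝ) (h : E → ℝ) :
    ∫ y in sphere x r, h y ∂μH[(Module.finrank ℝ E : ℝ) - 1] =
      ∫ y, h (x + y) ∂surfaceMeasure E r := by
  have hp := (IsometryEquiv.addLeft x).measurePreserving_hausdorffMeasure
    ((Module.finrank ℝ E : ℝ) - 1)
  rw [← hp.setIntegral_preimage_emb
    (IsometryEquiv.addLeft x).toHomeomorph.measurableEmbedding]
  have h2 : (IsometryEquiv.addLeft x) ⁻¹' sphere x r = sphere (0 : E) r := by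
    ext y; simp
  rw [h2]
  rfl

theorem setAverage_sphere_eq_surfaceMeasure (x : E) (r : ℝ) (h : E → ℝ) :
    ⨍ y in sphere x r, h y ∂μH[(Module.finrank ℝ E : ℝ) - 1] =
      ((surfaceMeasure E r).real univ)⁻¹ * ∫ y, h (x + y) ∂surfaceMeasure E r := by
  rw [setAverage_eq, setIntegral_sphere_eq_surfaceMeasure, smul_eq_mul]
  congr 2
  have := setIntegral_sphere_eq_surfaceMeasure x r (fun _ => (1 : ℝ))
  simpa using this

variable [FiniteDimensional ℝ E]

theorem hausdorffMeasure_sphere_lt_top (r : ℝ) (hr : 0 < r) :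
    μH[(Module.finrank ℝ E : ℝ) - 1] (sphere (0 : E) r) < ⊤ := by
  refine (isCompact_sphere 0 r).measure_lt_top_of_nhdsWithin fun x hx => ?_
  have hxr : ‖x‖ = r := mem_sphere_zero_iff_norm.1 hx
  set e : E := r⁻¹ • x with he_def
  have he : ‖e‖ = 1 := by
    rw [he_def, norm_smul, hxr, Real.norm_eq_abs, abs_of_pos (inv_pos.2 hr),
      inv_mul_cancel₀ hr.ne']
  have hxe : inner ℝ e x = r := by
    rw [he_def, inner_smul_left, real_inner_self_eq_norm_sq, hxr]
    simp; field_simp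
  let P := (ℝ ∙ e)ᗮ.orthogonalProjectionOnto
  let g : (ℝ ∙ e)ᗮ → E := fun w => (w : E) + √(r ^ 2 - ‖w‖ ^ 2) • e
  have hPx : P x = 0 := by
    apply Subtype.ext
    rw [coe_orthogonalProjectionOnto_orthogonal_unit he, hxe, he_def, smul_smul,
      mul_inv_cancel₀ hr.ne']
    simp
  have hg : ContDiffAt ℝ 1 g 0 := by
    refine ContDiffAt.add (ℝ ∙ e)ᗮ.subtypeL.contDiff.contDiffAt (ContDiffAt.smul ?_ contDiffAt_const)
    refine ContDiffAt.sqrt (contDiffAt_const.sub (contDiff_norm_sq ℝ).contDiffAt) ?_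
    simp [hr.ne']
  obtain ⟨C, t, ht, hC⟩ := hg.exists_lipschitzOnWith
  obtain ⟨k, hk, hkt, hkc⟩ := local_compact_nhds ht
  have hfin : μH[(Module.finrank ℝ E : ℝ) - 1] (g '' k) < ⊤ := by
    rw [← finrank_orthogonal_unit he]
    refine ((hC.mono hkt).hausdorffMeasure_image_le (by positivity)).trans_lt ?_
    exact ENNReal.mul_lt_top (ENNReal.rpow_lt_top_of_nonneg (by positivity) ENNReal.coe_ne_top)
      hkc.measure_lt_top
  refine ⟨g '' k, ?_, hfin⟩
  have h1 : P ⁻¹' k ∈ 𝓝 x := P.continuous.continuousAt.preimage_mem_nhds (by rwa [hPx])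
  have h2 : {y : E | 0 < inner ℝ e y} ∈ 𝓝 x :=
    (isOpen_lt continuous_const (by fun_prop)).mem_nhds (by simpa [hxe] using hr)
  filter_upwards [mem_nhdsWithin_of_mem_nhds h1, mem_nhdsWithin_of_mem_nhds h2,
    self_mem_nhdsWithin] with y hy1 hy2 hy3
  refine ⟨P y, hy1, ?_⟩
  have hy2' : 0 < inner ℝ e y := hy2
  simp only [g, P]
  rw [norm_sq_orthogonalProjectionOnto_orthogonal_unit he, mem_sphere_zero_iff_norm.1 hy3,
    sub_sub_cancel, Real.sqrt_sq hy2'.le, coe_orthogonalProjectionOnto_orthogonal_unit he,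
    sub_add_cancel]

theorem hausdorffMeasure_sphere_pos [Nontrivial E] (r : ℝ) (hr : 0 < r) :
    0 < μH[(Module.finrank ℝ E : ℝ) - 1] (sphere (0 : E) r) := by
  obtain ⟨e, he⟩ := exists_norm_eq E zero_le_one
  rw [← finrank_orthogonal_unit he]
  refine lt_of_lt_of_le ?_ (hausdorffMeasure_orthogonalProjectionOnto_le (ℝ ∙ e)ᗮ _ _
    (by positivity))
  refine lt_of_lt_of_le ((isOpen_ball (x := (0 : (ℝ ∙ e)ᗮ)) (ε := r)).measure_pos _
    (nonempty_ball.2 hr)) (measure_mono ?_)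
  intro w (hw : w ∈ ball 0 r)
  have hw' : ‖w‖ < r := by simpa using hw
  have hwe : inner ℝ (w : E) e = 0 := by
    rw [real_inner_comm]; exact Submodule.mem_orthogonal_singleton_iff_inner_right.1 w.2
  have hsq : 0 ≤ r ^ 2 - ‖w‖ ^ 2 := by nlinarith [norm_nonneg w]
  refine ⟨(w : E) + √(r ^ 2 - ‖w‖ ^ 2) • e, ?_, ?_⟩
  · rw [mem_sphere_zero_iff_norm, ← sq_eq_sq₀ (norm_nonneg _) hr.le, norm_add_sq_real,
      inner_smul_right, hwe, norm_smul, he, mul_one, Real.norm_eq_abs, sq_abs, Real.sq_sqrt hsq,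
      Submodule.coe_norm]
    ring
  · apply Subtype.ext
    rw [coe_orthogonalProjectionOnto_orthogonal_unit he, inner_add_right, inner_smul_right,
      real_inner_self_eq_norm_sq, he, real_inner_comm, hwe]
    simp

theorem isFiniteMeasure_surfaceMeasure {r : ℝ} (hr : 0 < r) :
    IsFiniteMeasure (surfaceMeasure E r) :=
  ⟨by simpa [surfaceMeasure] using hausdorffMeasure_sphere_lt_top r hr⟩

theorem surfaceMeasure_real_univ_pos [Nontrivial E] {r : ℝ} (hr : 0 < r) :
    0 < (surfaceMeasure E r).real univ := by
  have := isFiniteMeasure_surfaceMeasure (E := E) hr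
  refine ENNReal.toReal_pos ?_ (measure_ne_top _ _)
  simpa [surfaceMeasure] using (hausdorffMeasure_sphere_pos (E := E) r hr).ne'

end SphereMeasure

section CompactSupport

variable {X Y : Type*} [TopologicalSpace X] [T2Space X] [MeasurableSpace X] [BorelSpace X]
  [TopologicalSpace Y] [T2Space Y] [MeasurableSpace Y] [BorelSpace Y]

theorem integrable_prod_of_continuousOn_of_ae_mem [SecondCountableTopologyEither X Y]
    {μ : Measure X} [IsFiniteMeasure μ] {σ : Measure Y} [IsFiniteMeasure σ]
    {A : Set X} {B : Set Y} (hA : IsCompact A) (hB : IsCompact B)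
    (hμ : ∀ᵐ x ∂μ, x ∈ A) (hσ : ∀ᵐ y ∂σ, y ∈ B) {f : X × Y → ℝ} (hf : ContinuousOn f (A ×ˢ B)) :
    Integrable f (μ.prod σ) := by
  refine integrable_of_continuousOn_of_ae_mem (hA.prod hB) ?_ hf
  filter_upwards [Measure.quasiMeasurePreserving_fst.ae hμ,
    Measure.quasiMeasurePreserving_snd.ae hσ] with p h1 h2 using ⟨h1, h2⟩

end CompactSupport

theorem continuous_integral_of_ae_mem_compact {X Z : Type*} [TopologicalSpace X]
    [MeasurableSpace X] [BorelSpace X] [TopologicalSpace Z]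
    [FirstCountableTopology Z] [LocallyCompactSpace Z] [SecondCountableTopologyEither Z X]
    {σ : Measure X} [IsFiniteMeasure σ] {B : Set X} (hB : IsCompact B) (hσ : ∀ᵐ y ∂σ, y ∈ B)
    {f : Z → X → ℝ} (hf : Continuous (Function.uncurry f)) :
    Continuous fun z => ∫ y, f z y ∂σ := by
  have h := continuous_parametric_integral_of_continuous (μ := σ) hf hB
  rwa [Measure.restrict_eq_self_of_ae_mem hσ] at h

/-- The Newtonian kernel, truncated at squared distance `δ`. -/
noncomputable def truncatedKernel {E : Type*} [NormedAddCommGroup E] (ν δ : ℝ) (z : E) : ℝ :=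
  newtonProfile ν (max (‖z‖ ^ 2) δ)

section TruncatedKernel

variable {E : Type*} [NormedAddCommGroup E]

theorem continuous_truncatedKernel (ν : ℝ) {δ : ℝ} (hδ : 0 < δ) :
    Continuous (truncatedKernel ν δ : E → ℝ) :=
  (continuousOn_newtonProfile ν).comp_continuous (by fun_prop) fun _ => lt_max_of_lt_right hδ

theorem antitoneOn_newtonProfile (ν : ℝ) : AntitoneOn (newtonProfile ν) (Ioi 0) :=
  (strictAntiOn_newtonProfile ν).antitoneOn

theorem truncatedKernel_le_newtonProfile (ν : ℝ) {δ : ℝ} {z : E} (hz : z ≠ 0) :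
    truncatedKernel ν δ z ≤ newtonProfile ν (‖z‖ ^ 2) := by
  have : 0 < ‖z‖ ^ 2 := by positivity
  exact antitoneOn_newtonProfile ν this (lt_max_of_lt_left this) (le_max_left _ _)

theorem truncatedKernel_le_newtonProfile_self (ν : ℝ) {δ : ℝ} (hδ : 0 < δ) (z : E) :
    truncatedKernel ν δ z ≤ newtonProfile ν δ :=
  antitoneOn_newtonProfile ν hδ (lt_max_of_lt_right hδ) (le_max_right _ _)

theorem truncatedKernel_anti (ν : ℝ) {δ δ' : ℝ} (hδ : 0 < δ) (h : δ ≤ δ') (z : E) :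
    truncatedKernel ν δ' z ≤ truncatedKernel ν δ z :=
  antitoneOn_newtonProfile ν (lt_max_of_lt_right hδ)
    (lt_max_of_lt_right (hδ.trans_le h)) (max_le_max_left _ h)

theorem truncatedKernel_anti_norm (ν : ℝ) {δ : ℝ} (hδ : 0 < δ) {z w : E} (h : ‖z‖ ≤ ‖w‖) :
    truncatedKernel ν δ w ≤ truncatedKernel ν δ z :=
  antitoneOn_newtonProfile ν (lt_max_of_lt_right hδ)
    (lt_max_of_lt_right hδ) (max_le_max_right _ (by gcongr))

theorem truncatedKernel_of_le (ν : ℝ) {δ : ℝ} {z : E} (h : δ ≤ ‖z‖ ^ 2) :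
    truncatedKernel ν δ z = newtonProfile ν (‖z‖ ^ 2) := by
  rw [truncatedKernel, max_eq_left h]

theorem integrable_truncatedKernel [MeasurableSpace E] [BorelSpace E] {σ : Measure E} [IsFiniteMeasure σ] {B : Set E}
    (hB : IsCompact B) (hσ : ∀ᵐ y ∂σ, y ∈ B) (ν : ℝ) {δ : ℝ} (hδ : 0 < δ) (z : E) :
    Integrable (fun y => truncatedKernel ν δ (z - y)) σ :=
  integrable_of_continuousOn_of_ae_mem hB hσ
    ((continuous_truncatedKernel ν hδ).comp (continuous_const.sub continuous_id)).continuousOn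

end TruncatedKernel

theorem norm_sub_le_norm_smul_sub {E : Type*} [NormedAddCommGroup E] [InnerProductSpace ℝ E]
    {z y : E} (h : ‖y‖ ≤ ‖z‖) {s : ℝ} (hs : 1 ≤ s) :
    ‖z - y‖ ≤ ‖s • z - y‖ := by
  rw [← sq_le_sq₀ (norm_nonneg _) (norm_nonneg _), norm_sub_sq_real, norm_sub_sq_real,
    norm_smul, inner_smul_left, Real.norm_eq_abs, abs_of_nonneg (by linarith)]
  have h1 : inner ℝ z y ≤ ‖z‖ ^ 2 :=
    (real_inner_le_norm z y).trans (by rw [sq]; gcongr)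
  simp only [conj_trivial]
  nlinarith [mul_nonneg (sub_nonneg.2 hs) (sub_nonneg.2 h1),
    mul_nonneg (mul_nonneg (sub_nonneg.2 hs) (sub_nonneg.2 hs)) (sq_nonneg ‖z‖)]

section SphereKernel

variable {E : Type*} [NormedAddCommGroup E] [InnerProductSpace ℝ E] [FiniteDimensional ℝ E]
  [MeasurableSpace E] [BorelSpace E] {ν : ℝ}

theorem newtonPotential_surfaceMeasure_exterior (hν : 2 * ν = Module.finrank ℝ E)
    (hn : 2 ≤ Module.finrank ℝ E) {r : ℝ} (hr : 0 < r) {z : E} (hz : r < ‖z‖) :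
    ∫ y, newtonProfile ν (‖z - y‖ ^ 2) ∂surfaceMeasure E r =
      (surfaceMeasure E r).real univ * newtonProfile ν (‖z‖ ^ 2) := by
  have : Nontrivial E := Module.nontrivial_of_finrank_pos (R := ℝ) (by omega)
  have hs : 0 < ‖z‖ := hr.trans hz
  have := isFiniteMeasure_surfaceMeasure (E := E) hr
  have := isFiniteMeasure_surfaceMeasure (E := E) hs
  have hcont : ContinuousOn (fun p : E × E => newtonProfile ν (‖p.1 - p.2‖ ^ 2))
      (sphere 0 ‖z‖ ×ˢ sphere 0 r) := by
    refine (continuousOn_newtonProfile ν).comp (by fun_prop) ?_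
    rintro ⟨x, y⟩ ⟨hx, hy⟩
    have hx' : ‖x‖ = ‖z‖ := mem_sphere_zero_iff_norm.1 hx
    have hy' : ‖y‖ = r := mem_sphere_zero_iff_norm.1 hy
    have : x - y ≠ 0 := by
      intro h; rw [sub_eq_zero] at h; subst h; linarith
    exact mem_Ioi.2 (by positivity)
  have hswap := integral_integral_swap (integrable_prod_of_continuousOn_of_ae_mem
    (isCompact_sphere (0 : E) ‖z‖) (isCompact_sphere (0 : E) r) (ae_mem_surfaceMeasure _)
    (ae_mem_surfaceMeasure _) hcont) (f := fun x y => newtonProfile ν (‖x - y‖ ^ 2))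
  have h1 : ∫ x, ∫ y, newtonProfile ν (‖x - y‖ ^ 2) ∂surfaceMeasure E r ∂surfaceMeasure E ‖z‖ =
      ∫ _, ∫ y, newtonProfile ν (‖z - y‖ ^ 2) ∂surfaceMeasure E r ∂surfaceMeasure E ‖z‖ := by
    refine integral_congr_ae ?_
    filter_upwards [ae_mem_surfaceMeasure ‖z‖] with x hx
    exact (isRotationInvariant_surfaceMeasure r).integral_comp_norm_sub
      (fun q => newtonProfile ν (q ^ 2)) (mem_sphere_zero_iff_norm.1 hx)
  have h2 : ∫ y, ∫ x, newtonProfile ν (‖x - y‖ ^ 2) ∂surfaceMeasure E ‖z‖ ∂surfaceMeasure E r =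
      ∫ _, (surfaceMeasure E ‖z‖).real univ * newtonProfile ν (‖z‖ ^ 2) ∂surfaceMeasure E r := by
    refine integral_congr_ae ?_
    filter_upwards [ae_mem_surfaceMeasure r] with y hy
    have hy' : ‖y‖ < ‖z‖ := by rwa [mem_sphere_zero_iff_norm.1 hy]
    simp_rw [fun x => norm_sub_rev x y]
    exact (isRotationInvariant_surfaceMeasure ‖z‖).newtonPotential_interior hν hn
      (ae_mem_surfaceMeasure _) hy'
  rw [h1, h2, integral_const, integral_const, smul_eq_mul, smul_eq_mul] at hswap
  have hpos := surfaceMeasure_real_univ_pos (E := E) hs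
  apply mul_left_cancel₀ hpos.ne'
  rw [hswap]; ring

theorem newtonPotential_surfaceMeasure_of_norm_ne (hν : 2 * ν = Module.finrank ℝ E)
    (hn : 2 ≤ Module.finrank ℝ E) {r : ℝ} (hr : 0 < r) {z : E} (hz : ‖z‖ ≠ r) :
    ∫ y, newtonProfile ν (‖z - y‖ ^ 2) ∂surfaceMeasure E r =
      (surfaceMeasure E r).real univ * newtonProfile ν (max (‖z‖ ^ 2) (r ^ 2)) := by
  have := isFiniteMeasure_surfaceMeasure (E := E) hr
  rcases hz.lt_or_gt with h | h
  · rw [max_eq_right (by gcongr)]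
    exact (isRotationInvariant_surfaceMeasure r).newtonPotential_interior hν hn
      (ae_mem_surfaceMeasure _) h
  · rw [max_eq_left (by gcongr)]
    exact newtonPotential_surfaceMeasure_exterior hν hn hr h

theorem continuous_truncatedPotential {σ : Measure E} [IsFiniteMeasure σ] {B : Set E}
    (hB : IsCompact B) (hσ : ∀ᵐ y ∂σ, y ∈ B) (ν : ℝ) {δ : ℝ} (hδ : 0 < δ) :
    Continuous fun z => ∫ y, truncatedKernel ν δ (z - y) ∂σ :=
  continuous_integral_of_ae_mem_compact hB hσ
    ((continuous_truncatedKernel ν hδ).comp (continuous_fst.sub continuous_snd))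

theorem truncatedPotential_surfaceMeasure_le_profile (hν : 2 * ν = Module.finrank ℝ E)
    (hn : 2 ≤ Module.finrank ℝ E) {r δ : ℝ} (hr : 0 < r) (hδ : 0 < δ) (z : E) :
    ∫ y, truncatedKernel ν δ (z - y) ∂surfaceMeasure E r ≤
      (surfaceMeasure E r).real univ * newtonProfile ν (max (‖z‖ ^ 2) (r ^ 2)) := by
  have := isFiniteMeasure_surfaceMeasure (E := E) hr
  have : Nontrivial E := Module.nontrivial_of_finrank_pos (R := ℝ) (by omega)
  have hclosed : IsClosed {z : E | ∫ y, truncatedKernel ν δ (z - y) ∂surfaceMeasure E r ≤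
      (surfaceMeasure E r).real univ * newtonProfile ν (max (‖z‖ ^ 2) (r ^ 2))} :=
    isClosed_le (continuous_truncatedPotential (isCompact_sphere 0 r) (ae_mem_surfaceMeasure r) ν hδ)
      (continuous_const.mul (continuous_truncatedKernel ν (pow_pos hr 2)))
  have hdense : Dense (sphere (0 : E) r)ᶜ :=
    interior_eq_empty_iff_dense_compl.1 (interior_sphere _ hr.ne')
  refine hclosed.closure_subset_iff.2 (fun w hw => ?_) (hdense z)
  have hw' : ‖w‖ ≠ r := by simpa using hw
  have hne : ∀ y ∈ sphere (0 : E) r, w - y ≠ 0 := by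
    intro y hy h
    rw [sub_eq_zero] at h
    exact hw' (by rw [h]; exact mem_sphere_zero_iff_norm.1 hy)
  rw [mem_ofPred_eq, ← newtonPotential_surfaceMeasure_of_norm_ne hν hn hr hw']
  refine integral_mono_ae (integrable_truncatedKernel (isCompact_sphere 0 r)
    (ae_mem_surfaceMeasure r) ν hδ w) (integrable_of_continuousOn_of_ae_mem (isCompact_sphere 0 r)
    (ae_mem_surfaceMeasure r) ?_) ?_
  · refine (continuousOn_newtonProfile ν).comp (by fun_prop) fun y hy => ?_
    have := hne y hy
    exact mem_Ioi.2 (by positivity)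
  · filter_upwards [ae_mem_surfaceMeasure r] with y hy
    exact truncatedKernel_le_newtonProfile ν (hne y hy)

theorem truncatedPotential_surfaceMeasure_le (hν : 2 * ν = Module.finrank ℝ E)
    (hn : 2 ≤ Module.finrank ℝ E) {r δ : ℝ} (hr : 0 < r) (hδ : 0 < δ) (z : E) :
    ∫ y, truncatedKernel ν δ (z - y) ∂surfaceMeasure E r ≤
      (surfaceMeasure E r).real univ * truncatedKernel ν δ z := by
  have := isFiniteMeasure_surfaceMeasure (E := E) hr
  rcases le_total (‖z‖ ^ 2) δ with h | h
  · rw [truncatedKernel, max_eq_right h, ← smul_eq_mul, ← integral_const]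
    exact integral_mono (integrable_truncatedKernel (isCompact_sphere 0 r)
      (ae_mem_surfaceMeasure r) ν hδ z) (integrable_const _)
      fun y => truncatedKernel_le_newtonProfile_self ν hδ _
  · have hz : 0 < ‖z‖ ^ 2 := hδ.trans_le h
    rw [truncatedKernel_of_le ν h]
    refine (truncatedPotential_surfaceMeasure_le_profile hν hn hr hδ z).trans ?_
    gcongr
    exact antitoneOn_newtonProfile ν hz (lt_max_of_lt_left hz) (le_max_left _ _)

theorem eventually_truncatedPotential_surfaceMeasure_eq (hν : 2 * ν = Module.finrank ℝ E)
    (hn : 2 ≤ Module.finrank ℝ E) {r : ℝ} (hr : 0 < r) {z : E} (hz : ‖z‖ ≠ r) :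
    ∀ᶠ δ in 𝓝[>] (0 : ℝ), ∫ y, truncatedKernel ν δ (z - y) ∂surfaceMeasure E r =
      (surfaceMeasure E r).real univ * newtonProfile ν (max (‖z‖ ^ 2) (r ^ 2)) := by
  have hpos : 0 < (‖z‖ - r) ^ 2 := by
    have := sub_ne_zero.2 hz
    positivity
  filter_upwards [Ioo_mem_nhdsGT hpos] with δ hδ
  rw [← newtonPotential_surfaceMeasure_of_norm_ne hν hn hr hz]
  refine integral_congr_ae ?_
  filter_upwards [ae_mem_surfaceMeasure r] with y hy
  refine truncatedKernel_of_le ν (hδ.2.le.trans ?_)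
  rw [← mem_sphere_zero_iff_norm.1 hy]
  exact sq_le_sq.2 (by simpa using abs_norm_sub_norm_le z y)

theorem tendsto_truncatedPotential_surfaceMeasure (hν : 2 * ν = Module.finrank ℝ E)
    (hn : 2 ≤ Module.finrank ℝ E) {r : ℝ} (hr : 0 < r) (z : E) :
    Tendsto (fun δ => ∫ y, truncatedKernel ν δ (z - y) ∂surfaceMeasure E r) (𝓝[>] 0)
      (𝓝 ((surfaceMeasure E r).real univ * newtonProfile ν (max (‖z‖ ^ 2) (r ^ 2)))) := by
  have := isFiniteMeasure_surfaceMeasure (E := E) hr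
  by_cases hz : ‖z‖ = r
  swap
  · exact tendsto_const_nhds.congr'
      ((eventually_truncatedPotential_surfaceMeasure_eq hν hn hr hz).mono fun _ h => h.symm)
  refine tendsto_order.2 ⟨fun c hc => ?_, fun c hc => ?_⟩
  · have hcont : Continuous fun s : ℝ =>
        (surfaceMeasure E r).real univ * newtonProfile ν (max (‖s • z‖ ^ 2) (r ^ 2)) :=
      continuous_const.mul ((continuous_truncatedKernel ν (pow_pos hr 2)).comp
        (continuous_id.smul continuous_const))
    have h1 : ∀ᶠ s in 𝓝[>] (1 : ℝ),
        c < (surfaceMeasure E r).real univ * newtonProfile ν (max (‖s • z‖ ^ 2) (r ^ 2)) := by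
      refine (hcont.tendsto 1).mono_left nhdsWithin_le_nhds |>.eventually_const_lt ?_
      simpa using hc
    obtain ⟨s, hs, hs1⟩ := (h1.and self_mem_nhdsWithin).exists
    have hs1' : (1 : ℝ) < s := hs1
    have hsz : ‖s • z‖ ≠ r := by
      rw [norm_smul, Real.norm_eq_abs, abs_of_pos (by linarith), hz]
      nlinarith
    filter_upwards [eventually_truncatedPotential_surfaceMeasure_eq hν hn hr hsz,
      self_mem_nhdsWithin] with δ h2 h3
    refine hs.trans_le (h2.symm.trans_le (integral_mono_ae
      (integrable_truncatedKernel (isCompact_sphere 0 r) (ae_mem_surfaceMeasure r) ν h3 _)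
      (integrable_truncatedKernel (isCompact_sphere 0 r) (ae_mem_surfaceMeasure r) ν h3 _) ?_))
    filter_upwards [ae_mem_surfaceMeasure r] with y hy
    exact truncatedKernel_anti_norm ν h3 (norm_sub_le_norm_smul_sub
      (by rw [hz, mem_sphere_zero_iff_norm.1 hy]) hs1'.le)
  · filter_upwards [self_mem_nhdsWithin] with δ hδ
    exact (truncatedPotential_surfaceMeasure_le_profile hν hn hr hδ z).trans_lt hc

end SphereKernel

theorem tendsto_one_div_add_nhdsGT :
    Tendsto (fun n : ℕ => (1 : ℝ) / (n + 1)) atTop (𝓝[>] 0) :=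
  tendsto_nhdsWithin_iff.2 ⟨tendsto_one_div_add_atTop_nhds_zero_nat,
    Eventually.of_forall fun _ => mem_Ioi.2 Nat.one_div_pos_of_nat⟩

theorem truncatedKernel_sub_rev {F : Type*} [NormedAddCommGroup F] (ν δ : ℝ) (x y : F) :
    truncatedKernel ν δ (x - y) = truncatedKernel ν δ (y - x) := by
  rw [truncatedKernel, norm_sub_rev, ← truncatedKernel]

/-- The potential of `μ` with respect to the kernel truncated at squared distance `1 / (n + 1)`. -/
noncomputable def truncatedPotential {E : Type*} [NormedAddCommGroup E] [MeasurableSpace E]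
    (ν : ℝ) (μ : Measure E) (n : ℕ) (y : E) : ℝ :=
  ∫ x, truncatedKernel ν (1 / (n + 1)) (y - x) ∂μ

/-- The Newtonian potential of `μ`. -/
noncomputable def newtonPotential {E : Type*} [NormedAddCommGroup E] [MeasurableSpace E]
    (ν : ℝ) (μ : Measure E) (y : E) : EReal :=
  ⨆ n, (truncatedPotential ν μ n y : EReal)

theorem truncatedPotential_le_newtonPotential {E : Type*} [NormedAddCommGroup E]
    [MeasurableSpace E] {ν : ℝ} {μ : Measure E} (n : ℕ) (y : E) :
    (truncatedPotential ν μ n y : EReal) ≤ newtonPotential ν μ y :=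
  le_iSup (fun n => (truncatedPotential ν μ n y : EReal)) n

theorem monotone_truncatedPotential {E : Type*} [NormedAddCommGroup E] [MeasurableSpace E]
    [BorelSpace E] {ν : ℝ} {μ : Measure E} [IsFiniteMeasure μ] {K : Set E} (hK : IsCompact K) (hμ : ∀ᵐ x ∂μ, x ∈ K) (y : E) :
    Monotone fun n => truncatedPotential ν μ n y := fun _ _ h =>
  integral_mono (integrable_truncatedKernel hK hμ ν Nat.one_div_pos_of_nat y)
    (integrable_truncatedKernel hK hμ ν Nat.one_div_pos_of_nat y)
    fun _ => truncatedKernel_anti ν Nat.one_div_pos_of_nat (Nat.one_div_le_one_div h) _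

theorem eq_of_eqOn_of_forall_not_thinAt {E : Type*} [NormedAddCommGroup E]
    [InnerProductSpace ℝ E] [MeasurableSpace E] [BorelSpace E] {d : ℝ} {A : Set E} (hA : ∀ x, ¬ ThinAt d A x)
    {u v : E → EReal} (hu : @Continuous E EReal (fineTopology E d) _ u)
    (hv : @Continuous E EReal (fineTopology E d) _ v) (h : EqOn u v A) : u = v := by
  ext1 x
  have hx := not_not.1 (hA x)
  have hcl : @IsClosed E (fineTopology E d) {y | u y = v y} :=
    @isClosed_eq EReal E _ (fineTopology E d) _ _ _ hu hv
  exact (@IsClosed.closure_subset_iff E (fineTopology E d) _ _ hcl).2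
    (fun y hy => h hy.1) hx

section NewtonPotential

variable {E : Type*} [NormedAddCommGroup E] [InnerProductSpace ℝ E] [FiniteDimensional ℝ E]
  [MeasurableSpace E] [BorelSpace E] {ν : ℝ}

variable {μ : Measure E} [IsFiniteMeasure μ] {K : Set E}

theorem continuous_truncatedPotential_nat (hK : IsCompact K) (hμ : ∀ᵐ x ∂μ, x ∈ K) (n : ℕ) :
    Continuous (truncatedPotential ν μ n) :=
  continuous_truncatedPotential hK hμ ν Nat.one_div_pos_of_nat

theorem tendsto_truncatedPotential (hK : IsCompact K) (hμ : ∀ᵐ x ∂μ, x ∈ K) (y : E) :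
    Tendsto (fun n => (truncatedPotential ν μ n y : EReal)) atTop (𝓝 (newtonPotential ν μ y)) :=
  tendsto_atTop_iSup fun _ _ h => EReal.coe_le_coe_iff.2 (monotone_truncatedPotential hK hμ y h)

theorem newtonPotential_eq_integral (hK : IsCompact K) (hμ : ∀ᵐ x ∂μ, x ∈ K) {y : E}
    (hy : y ∉ K) :
    newtonPotential ν μ y = ((∫ x, newtonProfile ν (‖y - x‖ ^ 2) ∂μ : ℝ) : EReal) := by
  refine tendsto_nhds_unique (tendsto_truncatedPotential hK hμ y) ?_
  obtain ⟨ρ, hρ, hball⟩ := Metric.isOpen_iff.1 hK.isClosed.isOpen_compl y hy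
  have hev : ∀ᶠ n : ℕ in atTop, (1 : ℝ) / (n + 1) < ρ ^ 2 :=
    tendsto_one_div_add_atTop_nhds_zero_nat.eventually_lt_const (by positivity)
  refine tendsto_const_nhds.congr' ?_
  filter_upwards [hev] with n hn
  rw [EReal.coe_eq_coe_iff]
  refine integral_congr_ae ?_
  filter_upwards [hμ] with x hx
  refine (truncatedKernel_of_le ν (hn.le.trans ?_)).symm
  have : ρ ≤ ‖y - x‖ := by
    by_contra! h
    exact hball (by rwa [mem_ball, dist_comm, dist_eq_norm]) hx
  gcongr

theorem integral_sphere_truncatedPotential (hK : IsCompact K) (hμ : ∀ᵐ x ∂μ, x ∈ K) {r : ℝ}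
    (hr : 0 < r) (n : ℕ) (y : E) :
    ∫ w, truncatedPotential ν μ n (y + w) ∂surfaceMeasure E r =
      ∫ x, ∫ w, truncatedKernel ν (1 / (n + 1)) ((x - y) - w) ∂surfaceMeasure E r ∂μ := by
  have := isFiniteMeasure_surfaceMeasure (E := E) hr
  simp only [truncatedPotential]
  rw [integral_integral_swap (f := fun w x => truncatedKernel ν (1 / ((n : ℝ) + 1)) (y + w - x))]
  · congr with x
    congr with w
    rw [truncatedKernel_sub_rev, sub_sub]
  · exact integrable_prod_of_continuousOn_of_ae_mem (isCompact_sphere (0 : E) r) hK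
      (ae_mem_surfaceMeasure r) hμ ((continuous_truncatedKernel ν Nat.one_div_pos_of_nat).comp
        (by fun_prop : Continuous fun p : E × E => y + p.1 - p.2)).continuousOn

theorem integrable_integral_truncatedKernel (hK : IsCompact K) (hμ : ∀ᵐ x ∂μ, x ∈ K) {r δ : ℝ}
    (hr : 0 < r) (hδ : 0 < δ) (y : E) :
    Integrable (fun x => ∫ w, truncatedKernel ν δ ((x - y) - w) ∂surfaceMeasure E r) μ := by
  have := isFiniteMeasure_surfaceMeasure (E := E) hr
  exact integrable_of_continuousOn_of_ae_mem hK hμ ((continuous_truncatedPotential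
    (isCompact_sphere 0 r) (ae_mem_surfaceMeasure r) ν hδ).comp
      (continuous_id.sub continuous_const)).continuousOn

theorem integral_sphere_truncatedPotential_le (hν : 2 * ν = Module.finrank ℝ E)
    (hn : 2 ≤ Module.finrank ℝ E) (hK : IsCompact K) (hμ : ∀ᵐ x ∂μ, x ∈ K) {r : ℝ}
    (hr : 0 < r) (n : ℕ) (y : E) :
    ∫ w, truncatedPotential ν μ n (y + w) ∂surfaceMeasure E r ≤
      (surfaceMeasure E r).real univ * truncatedPotential ν μ n y := by
  rw [integral_sphere_truncatedPotential hK hμ hr, truncatedPotential, ← integral_const_mul]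
  refine integral_mono (integrable_integral_truncatedKernel hK hμ hr Nat.one_div_pos_of_nat y)
    ((integrable_truncatedKernel hK hμ ν Nat.one_div_pos_of_nat y).const_mul _) fun x => ?_
  simp only
  rw [truncatedKernel_sub_rev ν _ y x]
  exact truncatedPotential_surfaceMeasure_le hν hn hr Nat.one_div_pos_of_nat _

theorem tendsto_integral_sphere_truncatedPotential (hν : 2 * ν = Module.finrank ℝ E)
    (hn : 2 ≤ Module.finrank ℝ E) (hK : IsCompact K) (hμ : ∀ᵐ x ∂μ, x ∈ K) {r : ℝ}
    (hr : 0 < r) (y : E) :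
    Tendsto (fun n => ∫ w, truncatedPotential ν μ n (y + w) ∂surfaceMeasure E r) atTop
      (𝓝 ((surfaceMeasure E r).real univ * ∫ x, truncatedKernel ν (r ^ 2) (y - x) ∂μ)) := by
  have := isFiniteMeasure_surfaceMeasure (E := E) hr
  simp_rw [integral_sphere_truncatedPotential hK hμ hr]
  rw [← integral_const_mul]
  set m := (surfaceMeasure E r).real univ
  set F : ℕ → E → ℝ := fun n x =>
    ∫ w, truncatedKernel ν (1 / (n + 1)) ((x - y) - w) ∂surfaceMeasure E r with hF
  have hFi : ∀ n, Integrable (F n) μ := fun n =>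
    integrable_integral_truncatedKernel hK hμ hr Nat.one_div_pos_of_nat y
  have hG : Integrable (fun x => m * truncatedKernel ν (r ^ 2) (y - x)) μ :=
    (integrable_truncatedKernel hK hμ ν (by positivity) y).const_mul _
  refine tendsto_integral_of_dominated_convergence
    (fun x => ‖F 0 x‖ + ‖m * truncatedKernel ν (r ^ 2) (y - x)‖)
    (fun n => (hFi n).aestronglyMeasurable) ((hFi 0).norm.add hG.norm)
    (fun n => ae_of_all _ fun x => ?_) (ae_of_all _ fun x => ?_)
  · have h1 : F 0 x ≤ F n x := integral_mono
      (integrable_truncatedKernel (isCompact_sphere 0 r) (ae_mem_surfaceMeasure r) ν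
        Nat.one_div_pos_of_nat _)
      (integrable_truncatedKernel (isCompact_sphere 0 r) (ae_mem_surfaceMeasure r) ν
        Nat.one_div_pos_of_nat _) fun _ => truncatedKernel_anti ν Nat.one_div_pos_of_nat
          (Nat.one_div_le_one_div n.zero_le) _
    have h2 : F n x ≤ m * truncatedKernel ν (r ^ 2) (y - x) := by
      rw [truncatedKernel_sub_rev]
      exact truncatedPotential_surfaceMeasure_le_profile hν hn hr Nat.one_div_pos_of_nat _
    rw [Real.norm_eq_abs, Real.norm_eq_abs, Real.norm_eq_abs]
    refine abs_le.2 ⟨?_, ?_⟩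
    · linarith [neg_abs_le (F 0 x), abs_nonneg (m * truncatedKernel ν (r ^ 2) (y - x))]
    · linarith [abs_nonneg (F 0 x), le_abs_self (m * truncatedKernel ν (r ^ 2) (y - x))]
  · rw [truncatedKernel_sub_rev]
    exact (tendsto_truncatedPotential_surfaceMeasure hν hn hr (x - y)).comp
      tendsto_one_div_add_nhdsGT

theorem integrable_surfaceMeasure_of_continuous {r : ℝ} (hr : 0 < r) {g : E → ℝ}
    (hg : Continuous g) : Integrable g (surfaceMeasure E r) := by
  have := isFiniteMeasure_surfaceMeasure (E := E) hr
  exact integrable_of_continuousOn_of_ae_mem (isCompact_sphere 0 r) (ae_mem_surfaceMeasure r)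
    hg.continuousOn

theorem neg_newtonPotential_le_sphereMean (hν : 2 * ν = Module.finrank ℝ E)
    (hn : 2 ≤ Module.finrank ℝ E) (hK : IsCompact K) (hμ : ∀ᵐ x ∂μ, x ∈ K) {r : ℝ}
    (hr : 0 < r) (y : E) :
    -newtonPotential ν μ y ≤
      sphereMean ((Module.finrank ℝ E : ℝ) - 1) (fun y => -newtonPotential ν μ y) y r := by
  have := isFiniteMeasure_surfaceMeasure (E := E) hr
  have : Nontrivial E := Module.nontrivial_of_finrank_pos (R := ℝ) (by omega)
  have hm := surfaceMeasure_real_univ_pos (E := E) hr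
  refine le_iInf fun k => ?_
  rw [setAverage_sphere_eq_surfaceMeasure]
  set m := (surfaceMeasure E r).real univ
  set p := fun n w => truncatedPotential ν μ n (y + w) with hp
  have hpc : ∀ n, Continuous (p n) := fun n =>
    (continuous_truncatedPotential_nat hK hμ n).comp (continuous_const.add continuous_id)
  have hp0 : ∀ n w, p 0 w ≤ p n w := fun n w =>
    monotone_truncatedPotential hK hμ (y + w) n.zero_le
  have hcont : ∀ n, Continuous fun w => max (-p n w) (-(k : ℝ)) := fun n =>
    (hpc n).neg.max continuous_const
  have hlim : Tendsto (fun n => ∫ w, max (-p n w) (-(k : ℝ)) ∂surfaceMeasure E r) atTop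
      (𝓝 (∫ w, ((-newtonPotential ν μ (y + w)) ⊔ (-(k : ℝ) : EReal)).toReal
        ∂surfaceMeasure E r)) := by
    refine tendsto_integral_of_dominated_convergence (fun w => |p 0 w| + k)
      (fun n => (hcont n).aestronglyMeasurable)
      (integrable_surfaceMeasure_of_continuous hr ((hpc 0).abs.add continuous_const))
      (fun n => ae_of_all _ fun w => ?_) (ae_of_all _ fun w => ?_)
    · have hk : (0 : ℝ) ≤ k := k.cast_nonneg
      rw [Real.norm_eq_abs, abs_le]
      constructor
      · linarith [le_max_right (-p n w) (-(k : ℝ)), abs_nonneg (p 0 w)]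
      · refine max_le ?_ ?_
        · linarith [neg_abs_le (p 0 w), hp0 n w]
        · linarith [abs_nonneg (p 0 w)]
    · have h1 : Tendsto (fun n => (-(p n w : EReal)) ⊔ (-(k : ℝ) : EReal)) atTop
          (𝓝 ((-newtonPotential ν μ (y + w)) ⊔ (-(k : ℝ) : EReal))) :=
        ((continuous_neg.tendsto _).comp
          (tendsto_truncatedPotential hK hμ (y + w))).max tendsto_const_nhds
      have hbot : (-newtonPotential ν μ (y + w)) ⊔ (-(k : ℝ) : EReal) ≠ ⊥ :=
        ne_bot_of_le_ne_bot (EReal.coe_ne_bot (-(k : ℝ)))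
          (by rw [EReal.coe_neg]; exact le_sup_right)
      have htop : (-newtonPotential ν μ (y + w)) ⊔ (-(k : ℝ) : EReal) ≠ ⊤ := by
        refine ne_of_lt (sup_lt_iff.2 ⟨?_, ?_⟩)
        · refine lt_of_le_of_lt (EReal.neg_le_neg_iff.2
            (truncatedPotential_le_newtonPotential 0 (y + w))) ?_
          rw [← EReal.coe_neg]; exact EReal.coe_lt_top _
        · rw [← EReal.coe_neg]; exact EReal.coe_lt_top _
      have h2 := (EReal.tendsto_toReal htop hbot).comp h1
      refine h2.congr fun n => ?_
      simp only [Function.comp]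
      rw [← EReal.coe_neg, ← EReal.coe_neg, ← EReal.coe_strictMono.monotone.map_sup,
        EReal.toReal_coe]
  have hlim' := (continuous_coe_real_ereal.tendsto _).comp (hlim.const_mul m⁻¹)
  refine ge_of_tendsto' hlim' fun n => ?_
  refine (EReal.neg_le_neg_iff.2 (truncatedPotential_le_newtonPotential n y)).trans ?_
  simp only [Function.comp]
  rw [← EReal.coe_neg, EReal.coe_le_coe_iff, ← div_eq_inv_mul, le_div_iff₀ hm]
  have h3 := integral_sphere_truncatedPotential_le hν hn hK hμ hr n y
  have h4 : ∫ w, -p n w ∂surfaceMeasure E r ≤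
      ∫ w, max (-p n w) (-(k : ℝ)) ∂surfaceMeasure E r :=
    integral_mono (integrable_surfaceMeasure_of_continuous hr (hpc n).neg)
      (integrable_surfaceMeasure_of_continuous hr (hcont n)) fun w => le_max_left _ _
  rw [integral_neg] at h4
  linarith

theorem isSubharmonicOn_neg_newtonPotential (hν : 2 * ν = Module.finrank ℝ E)
    (hn : 2 ≤ Module.finrank ℝ E) (hK : IsCompact K) (hμ : ∀ᵐ x ∂μ, x ∈ K) :
    IsSubharmonicOn ((Module.finrank ℝ E : ℝ) - 1) (fun y => -newtonPotential ν μ y) univ := by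
  have : Nontrivial E := Module.nontrivial_of_finrank_pos (R := ℝ) (by omega)
  have : NoncompactSpace E := NormedSpace.noncompactSpace ℝ E
  refine ⟨?_, fun y _ => ?_, ?_, fun y r hr _ => neg_newtonPotential_le_sphereMean hν hn hK hμ hr y⟩
  · rw [upperSemicontinuousOn_univ_iff]
    refine Continuous.comp_lowerSemicontinuous_antitone (g := fun x : EReal => -x) continuous_neg
      (lowerSemicontinuous_iSup fun n => Continuous.lowerSemicontinuous ?_)
      fun a b h => EReal.neg_le_neg_iff.2 h
    exact continuous_coe_real_ereal.comp (continuous_truncatedPotential_nat hK hμ n)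
  · refine lt_of_le_of_lt (EReal.neg_le_neg_iff.2 (truncatedPotential_le_newtonPotential 0 y)) ?_
    rw [← EReal.coe_neg]; exact EReal.coe_lt_top _
  · obtain ⟨y, hy⟩ := (ne_univ_iff_exists_notMem K).1 hK.ne_univ
    refine ⟨y, mem_univ y, ?_⟩
    simp only
    rw [newtonPotential_eq_integral hK hμ hy, ← EReal.coe_neg]
    exact EReal.coe_ne_bot _

theorem continuous_newtonPotential_fineTopology (hν : 2 * ν = Module.finrank ℝ E)
    (hn : 2 ≤ Module.finrank ℝ E) (hK : IsCompact K) (hμ : ∀ᵐ x ∂μ, x ∈ K) :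
    @Continuous E EReal (fineTopology E ((Module.finrank ℝ E : ℝ) - 1)) _ (newtonPotential ν μ) := by
  have h : @Continuous E EReal (fineTopology E ((Module.finrank ℝ E : ℝ) - 1)) _
      (fun y => -newtonPotential ν μ y) :=
    continuous_iff_le_induced.2 (iInf₂_le (fun y => -newtonPotential ν μ y)
      (isSubharmonicOn_neg_newtonPotential hν hn hK hμ))
  simpa only [Function.comp_def, neg_neg] using @Continuous.comp _ _ _ (fineTopology E ((Module.finrank ℝ E : ℝ) - 1)) _ _ _ _
    (continuous_neg (G := EReal)) h

end NewtonPotential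

theorem tendsto_integral_truncatedKernel_sub_div {E : Type*} [NormedAddCommGroup E]
    [MeasurableSpace E] [BorelSpace E] {ν : ℝ} {μ : Measure E} [IsFiniteMeasure μ] {K : Set E}
    (hK : IsCompact K) (hμ : ∀ᵐ x ∂μ, x ∈ K) (y : E) {R : ℝ} (hR : 0 < R) :
    Tendsto (fun n : ℕ => ((∫ x, truncatedKernel ν (R ^ 2) (y - x) ∂μ) -
        ∫ x, truncatedKernel ν ((R + 1 / (n + 1)) ^ 2) (y - x) ∂μ) /
        (newtonProfile ν (R ^ 2) - newtonProfile ν ((R + 1 / (n + 1)) ^ 2)))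
      atTop (𝓝 (μ.real (closedBall y R))) := by
  have hδ : 0 < R ^ 2 := by positivity
  have hpos : ∀ n : ℕ, (0 : ℝ) < 1 / (n + 1) := fun n => Nat.one_div_pos_of_nat
  have hlt : ∀ n : ℕ, R ^ 2 < (R + 1 / (n + 1)) ^ 2 := fun n => by nlinarith [hpos n]
  have hδ' : ∀ n : ℕ, 0 < (R + 1 / ((n : ℝ) + 1)) ^ 2 := fun n => hδ.trans (hlt n)
  have hφ : ∀ n : ℕ, 0 < newtonProfile ν (R ^ 2) - newtonProfile ν ((R + 1 / (n + 1)) ^ 2) :=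
    fun n => sub_pos.2 (strictAntiOn_newtonProfile ν hδ (hδ' n) (hlt n))
  have hint : ∀ {δ : ℝ}, 0 < δ → Integrable (fun x => truncatedKernel ν δ (y - x)) μ :=
    fun h => integrable_truncatedKernel hK hμ ν h y
  have hball : ∫ x, (closedBall y R).indicator (fun _ => (1 : ℝ)) x ∂μ =
      μ.real (closedBall y R) := by
    rw [integral_indicator_const _ isClosed_closedBall.measurableSet]; simp
  rw [← hball]
  simp_rw [fun n : ℕ => (integral_sub (hint hδ) (hint (hδ' n))).symm, ← integral_div]
  refine tendsto_integral_of_dominated_convergence (fun _ => 1)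
    (fun n => (((hint hδ).sub (hint (hδ' n))).div_const _).aestronglyMeasurable)
    (integrable_const _) (fun n => ae_of_all _ fun x => ?_) (ae_of_all _ fun x => ?_)
  · rw [Real.norm_eq_abs, abs_of_nonneg (div_nonneg (sub_nonneg.2
      (truncatedKernel_anti ν hδ (hlt n).le _)) (hφ n).le), div_le_one (hφ n)]
    rcases le_total (‖y - x‖ ^ 2) ((R + 1 / ((n : ℝ) + 1)) ^ 2) with h | h
    · have : truncatedKernel ν ((R + 1 / ((n : ℝ) + 1)) ^ 2) (y - x) =
          newtonProfile ν ((R + 1 / ((n : ℝ) + 1)) ^ 2) := by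
        rw [truncatedKernel, max_eq_right h]
      rw [this]
      linarith [truncatedKernel_le_newtonProfile_self ν hδ (y - x)]
    · rw [truncatedKernel_of_le ν h, truncatedKernel_of_le ν ((hlt n).le.trans h), sub_self]
      exact (hφ n).le
  · by_cases hx : x ∈ closedBall y R
    · rw [indicator_of_mem hx]
      have hx' : ‖y - x‖ ≤ R := by rwa [← dist_eq_norm, dist_comm]
      have h1 : ‖y - x‖ ^ 2 ≤ R ^ 2 := by gcongr
      refine tendsto_const_nhds.congr fun n => ?_
      rw [truncatedKernel, truncatedKernel, max_eq_right h1,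
        max_eq_right (h1.trans (hlt n).le), div_self (hφ n).ne']
    · rw [indicator_of_notMem hx]
      have hx' : R < ‖y - x‖ := by
        rw [← dist_eq_norm, dist_comm]; simpa using hx
      have hev : ∀ᶠ n : ℕ in atTop, (1 : ℝ) / (n + 1) < ‖y - x‖ - R :=
        tendsto_one_div_add_atTop_nhds_zero_nat.eventually_lt_const (sub_pos.2 hx')
      refine tendsto_const_nhds.congr' ?_
      filter_upwards [hev] with n hn
      have h1 : (R + 1 / ((n : ℝ) + 1)) ^ 2 ≤ ‖y - x‖ ^ 2 := by
        have := hpos n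
        gcongr
        linarith
      rw [truncatedKernel_of_le ν h1, truncatedKernel_of_le ν ((hlt n).le.trans h1), sub_self,
        zero_div]

section Uniqueness

variable {E : Type*} [NormedAddCommGroup E] [InnerProductSpace ℝ E] [FiniteDimensional ℝ E]
  [MeasurableSpace E] [BorelSpace E] {ν : ℝ}
  {μ₁ μ₂ : Measure E} [IsFiniteMeasure μ₁] [IsFiniteMeasure μ₂] {K : Set E}

theorem integral_truncatedKernel_le_of_newtonPotential_eq (hν : 2 * ν = Module.finrank ℝ E)
    (hn : 2 ≤ Module.finrank ℝ E) (hK : IsCompact K) (hμ₁ : ∀ᵐ x ∂μ₁, x ∈ K)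
    (hμ₂ : ∀ᵐ x ∂μ₂, x ∈ K) (h : newtonPotential ν μ₁ = newtonPotential ν μ₂) {r : ℝ}
    (hr : 0 < r) (y : E) :
    ∫ x, truncatedKernel ν (r ^ 2) (y - x) ∂μ₁ ≤ ∫ x, truncatedKernel ν (r ^ 2) (y - x) ∂μ₂ := by
  have := isFiniteMeasure_surfaceMeasure (E := E) hr
  have : Nontrivial E := Module.nontrivial_of_finrank_pos (R := ℝ) (by omega)
  refine le_of_mul_le_mul_left ?_ (surfaceMeasure_real_univ_pos (E := E) hr)
  refine le_of_tendsto' (tendsto_integral_sphere_truncatedPotential hν hn hK hμ₁ hr y) fun n => ?_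
  have hc₁ : ∀ n, Continuous fun w => truncatedPotential ν μ₁ n (y + w) := fun n =>
    (continuous_truncatedPotential_nat hK hμ₁ n).comp (continuous_const.add continuous_id)
  have hc₂ : ∀ n, Continuous fun w => truncatedPotential ν μ₂ n (y + w) := fun n =>
    (continuous_truncatedPotential_nat hK hμ₂ n).comp (continuous_const.add continuous_id)
  have hlim : Tendsto (fun k => ∫ w, min (truncatedPotential ν μ₁ n (y + w))
      (truncatedPotential ν μ₂ k (y + w)) ∂surfaceMeasure E r) atTop
      (𝓝 (∫ w, truncatedPotential ν μ₁ n (y + w) ∂surfaceMeasure E r)) := by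
    refine tendsto_integral_of_dominated_convergence
      (fun w => |truncatedPotential ν μ₁ n (y + w)| + |truncatedPotential ν μ₂ 0 (y + w)|)
      (fun k => ((hc₁ n).min (hc₂ k)).aestronglyMeasurable)
      (integrable_surfaceMeasure_of_continuous hr ((hc₁ n).abs.add (hc₂ 0).abs))
      (fun k => ae_of_all _ fun w => ?_) (ae_of_all _ fun w => ?_)
    · have h0 : truncatedPotential ν μ₂ 0 (y + w) ≤ truncatedPotential ν μ₂ k (y + w) :=
        monotone_truncatedPotential hK hμ₂ (y + w) k.zero_le
      rw [Real.norm_eq_abs, abs_le]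
      constructor
      · refine le_min ?_ ?_
        · linarith [neg_abs_le (truncatedPotential ν μ₁ n (y + w)),
            abs_nonneg (truncatedPotential ν μ₂ 0 (y + w))]
        · linarith [neg_abs_le (truncatedPotential ν μ₂ 0 (y + w)),
            abs_nonneg (truncatedPotential ν μ₁ n (y + w))]
      · refine (min_le_left _ _).trans ?_
        linarith [le_abs_self (truncatedPotential ν μ₁ n (y + w)),
          abs_nonneg (truncatedPotential ν μ₂ 0 (y + w))]
    · rw [← EReal.tendsto_coe]
      have h1 : Tendsto (fun k => min (truncatedPotential ν μ₁ n (y + w) : EReal)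
          (truncatedPotential ν μ₂ k (y + w))) atTop
          (𝓝 (min (truncatedPotential ν μ₁ n (y + w) : EReal) (newtonPotential ν μ₂ (y + w)))) :=
        tendsto_const_nhds.min (tendsto_truncatedPotential hK hμ₂ (y + w))
      rw [min_eq_left (by rw [← h]; exact truncatedPotential_le_newtonPotential n _)] at h1
      simpa only [EReal.coe_strictMono.monotone.map_min] using h1
  exact le_of_tendsto_of_tendsto' hlim
    (tendsto_integral_sphere_truncatedPotential hν hn hK hμ₂ hr y) fun k =>
      integral_mono (integrable_surfaceMeasure_of_continuous hr ((hc₁ n).min (hc₂ k)))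
        (integrable_surfaceMeasure_of_continuous hr (hc₂ k)) fun w => min_le_right _ _

theorem le_of_forall_closedBall_eq
    (h : ∀ y : E, ∀ R : ℝ, 0 < R → μ₁ (closedBall y R) = μ₂ (closedBall y R)) : μ₁ ≤ μ₂ := by
  have hd : μ₂.rnDeriv μ₁ =ᵐ[μ₁] 1 := by
    have hsupp : ∀ᵐ x ∂μ₁, x ∈ μ₁.support := Measure.support_mem_ae
    filter_upwards [Besicovitch.ae_tendsto_rnDeriv μ₂ μ₁, hsupp] with x hx hxs
    refine tendsto_nhds_unique hx (tendsto_const_nhds.congr' ?_)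
    filter_upwards [self_mem_nhdsWithin] with R hR
    rw [← h x R hR, ENNReal.div_self _ (measure_ne_top _ _)]
    · rfl
    · exact ((Measure.mem_support_iff_forall _).1 hxs _ (closedBall_mem_nhds x hR)).ne'
  calc μ₁ = μ₁.withDensity (μ₂.rnDeriv μ₁) := by
        rw [withDensity_congr_ae hd, withDensity_one]
    _ ≤ μ₂ := Measure.withDensity_rnDeriv_le _ _

theorem measure_eq_of_newtonPotential_eq (hν : 2 * ν = Module.finrank ℝ E)
    (hn : 2 ≤ Module.finrank ℝ E) (hK : IsCompact K) (hμ₁ : ∀ᵐ x ∂μ₁, x ∈ K)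
    (hμ₂ : ∀ᵐ x ∂μ₂, x ∈ K) (h : newtonPotential ν μ₁ = newtonPotential ν μ₂) : μ₁ = μ₂ := by
  have hκ : ∀ r > 0, ∀ y, ∫ x, truncatedKernel ν (r ^ 2) (y - x) ∂μ₁ =
      ∫ x, truncatedKernel ν (r ^ 2) (y - x) ∂μ₂ := fun r hr y => le_antisymm
    (integral_truncatedKernel_le_of_newtonPotential_eq hν hn hK hμ₁ hμ₂ h hr y)
    (integral_truncatedKernel_le_of_newtonPotential_eq hν hn hK hμ₂ hμ₁ h.symm hr y)
  have hball : ∀ y : E, ∀ R : ℝ, 0 < R → μ₁ (closedBall y R) = μ₂ (closedBall y R) := by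
    intro y R hR
    rw [← ENNReal.toReal_eq_toReal_iff' (measure_ne_top _ _) (measure_ne_top _ _)]
    refine tendsto_nhds_unique (tendsto_integral_truncatedKernel_sub_div (ν := ν) hK hμ₁ y hR)
      ((tendsto_integral_truncatedKernel_sub_div (ν := ν) hK hμ₂ y hR).congr fun n => ?_)
    rw [hκ R hR, hκ (R + 1 / (n + 1)) (add_pos hR Nat.one_div_pos_of_nat)]
  exact le_antisymm (le_of_forall_closedBall_eq hball)
    (le_of_forall_closedBall_eq fun y R hR => (hball y R hR).symm)

end Uniqueness

section Riesz

variable {X : Type*} [TopologicalSpace X] [CompactSpace X]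

theorem exists_measure_of_nonneg_functional [T2Space X] [MeasurableSpace X] [BorelSpace X]
    (P : C(X, ℝ) →ₗ[ℝ] ℝ) (hP : ∀ g : C(X, ℝ), 0 ≤ g → 0 ≤ P g) :
    ∃ μ : Measure X, IsFiniteMeasure μ ∧ ∀ g : C(X, ℝ), ∫ x, g x ∂μ = P g := by
  let T : CompactlySupportedContinuousMap X ℝ →ₗ[ℝ] C(X, ℝ) :=
    { toFun := fun g => g.toContinuousMap, map_add' := fun _ _ => rfl, map_smul' := fun _ _ => rfl }
  let Λ := PositiveLinearMap.mk₀ (P ∘ₗ T) fun g hg => hP _ hg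
  refine ⟨RealRMK.rieszMeasure Λ, inferInstance, fun g => ?_⟩
  exact RealRMK.integral_rieszMeasure Λ (CompactlySupportedContinuousMap.continuousMapEquiv g)

/-- A bounded functional on `C(X, ℝ)` is the difference of two nonnegative ones. -/
theorem exists_nonneg_sub_nonneg_eq [Nonempty X] (Λ : C(X, ℝ) →L[ℝ] ℝ) :
    ∃ P Q : C(X, ℝ) →ₗ[ℝ] ℝ, (∀ g, 0 ≤ g → 0 ≤ P g) ∧ (∀ g, 0 ≤ g → 0 ≤ Q g) ∧
      ∀ g, Λ g = P g - Q g := by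
  obtain ⟨x₀⟩ := ‹Nonempty X›
  let s : PointedCone ℝ (C(X, ℝ) × C(X, ℝ)) :=
    { carrier := {p | 0 ≤ p.1 ∧ 0 ≤ p.2}
      add_mem' := fun ha hb => ⟨add_nonneg ha.1 hb.1, add_nonneg ha.2 hb.2⟩
      zero_mem' := ⟨le_rfl, le_rfl⟩
      smul_mem' := fun c p hp =>
        ⟨fun x => mul_nonneg c.2 (hp.1 x), fun x => mul_nonneg c.2 (hp.2 x)⟩ }
  let S : (C(X, ℝ) × C(X, ℝ)) →ₗ[ℝ] C(X, ℝ) := LinearMap.fst ℝ _ _ + LinearMap.snd ℝ _ _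
  let D : (C(X, ℝ) × C(X, ℝ)) →ₗ[ℝ] C(X, ℝ) := LinearMap.fst ℝ _ _ - LinearMap.snd ℝ _ _
  let ev : C(X, ℝ) →ₗ[ℝ] ℝ := (ContinuousMap.evalCLM ℝ x₀).toLinearMap
  let F : (C(X, ℝ) × C(X, ℝ)) →ₗ[ℝ] ℝ :=
    (1 / 2 : ℝ) • (Λ.toLinearMap ∘ₗ D + ‖Λ‖ • (ev ∘ₗ S))
  have hF : ∀ p, F p = 1 / 2 * (Λ (p.1 - p.2) + ‖Λ‖ * (p.1 x₀ + p.2 x₀)) := fun p => rfl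
  let V : Submodule ℝ (C(X, ℝ) × C(X, ℝ)) := (ℝ ∙ (1 : C(X, ℝ))).comap S
  obtain ⟨G, hG, hGs⟩ := riesz_extension s ⟨V, F.domRestrict V⟩ (by
    rintro ⟨⟨a, b⟩, hab⟩ ⟨ha, hb⟩
    obtain ⟨c, hc⟩ := Submodule.mem_span_singleton.1 hab
    have hsum : ∀ x, a x + b x = c := fun x => by
      have := DFunLike.congr_fun hc x
      simpa [S] using this.symm
    change 0 ≤ F (a, b)
    rw [hF]
    have hc0 : 0 ≤ c := by rw [← hsum x₀]; exact add_nonneg (ha x₀) (hb x₀)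
    have hnorm : ‖a - b‖ ≤ c := by
      refine (ContinuousMap.norm_le _ hc0).2 fun x => ?_
      have h1 : 0 ≤ a x := ha x
      have h2 : 0 ≤ b x := hb x
      rw [ContinuousMap.sub_apply, Real.norm_eq_abs, abs_le]
      constructor <;> linarith [hsum x]
    have hΛ := (abs_le.1 ((Real.norm_eq_abs _).symm.le.trans (Λ.le_opNorm (a - b)))).1
    have := mul_le_mul_of_nonneg_left hnorm (norm_nonneg Λ)
    simp only [hsum]
    linarith) (by
    rintro ⟨a, b⟩
    refine ⟨⟨(‖a‖ • 1, ‖b‖ • 1), ?_⟩, fun x => ?_, fun x => ?_⟩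
    · refine Submodule.mem_span_singleton.2 ⟨‖a‖ + ‖b‖, ?_⟩
      simp [S, add_smul]
    · have := neg_abs_le (a x)
      have := a.norm_coe_le_norm x
      rw [Real.norm_eq_abs] at this
      simp
      linarith
    · have := neg_abs_le (b x)
      have := b.norm_coe_le_norm x
      rw [Real.norm_eq_abs] at this
      simp
      linarith)
  refine ⟨G ∘ₗ LinearMap.inl ℝ _ _, G ∘ₗ LinearMap.inr ℝ _ _,
    fun g hg => hGs _ ⟨hg, le_rfl⟩, fun g hg => hGs _ ⟨le_rfl, hg⟩, fun g => ?_⟩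
  have hmem : (g, -g) ∈ V := by
    simp [V, S]
  have h1 : G (g, -g) = F (g, -g) := hG ⟨(g, -g), hmem⟩
  have h2 : F (g, -g) = Λ g := by
    rw [hF]
    simp only [ContinuousMap.neg_apply, add_neg_cancel, sub_neg_eq_add, map_add]
    ring
  rw [← h2, ← h1, LinearMap.comp_apply, LinearMap.comp_apply, ← map_sub]
  simp

end Riesz

section Approximation

variable {E : Type*} [NormedAddCommGroup E] [InnerProductSpace ℝ E] [FiniteDimensional ℝ E]
  [MeasurableSpace E] [BorelSpace E] {ν : ℝ}

theorem isHarmonicOn_newtonProfile (hν : 2 * ν = Module.finrank ℝ E)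
    (hn : 2 ≤ Module.finrank ℝ E) (y : E) :
    IsHarmonicOn ((Module.finrank ℝ E : ℝ) - 1) (fun x => newtonProfile ν (‖x - y‖ ^ 2)) {y}ᶜ := by
  have : Nontrivial E := Module.nontrivial_of_finrank_pos (R := ℝ) (by omega)
  refine ⟨(continuousOn_newtonProfile ν).comp (by fun_prop) fun x hx => ?_, fun x r hr hx => ?_⟩
  · have := sub_ne_zero.2 (mem_compl_singleton_iff.1 hx)
    exact mem_Ioi.2 (by positivity)
  · have hy : r < ‖y - x‖ := by
      by_contra! h
      exact hx (mem_closedBall.2 (by rwa [dist_eq_norm])) rfl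
    rw [setAverage_sphere_eq_surfaceMeasure]
    have h := newtonPotential_surfaceMeasure_exterior hν hn hr hy
    have h2 : ∀ w, x + w - y = -((y - x) - w) := fun w => by abel
    simp_rw [h2, norm_neg]
    rw [h, inv_mul_cancel_left₀ (surfaceMeasure_real_univ_pos hr).ne', norm_sub_rev]

theorem IsHarmonicOn.mono {F : Type*} [NormedAddCommGroup F] [InnerProductSpace ℝ F]
    [MeasurableSpace F] [BorelSpace F] {d : ℝ} {h : F → ℝ} {U V : Set F}
    (hh : IsHarmonicOn d h U) (hVU : V ⊆ U) : IsHarmonicOn d h V :=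
  ⟨hh.1.mono hVU, fun x r hr hx => hh.2 x r hr (hx.trans hVU)⟩

theorem IsHarmonicOn.zero {F : Type*} [NormedAddCommGroup F] [InnerProductSpace ℝ F]
    [MeasurableSpace F] [BorelSpace F] {d : ℝ} {U : Set F} :
    IsHarmonicOn d (fun _ : F => (0 : ℝ)) U :=
  ⟨continuousOn_const, fun x r _ _ => by simp⟩

theorem IsHarmonicOn.const_mul {F : Type*} [NormedAddCommGroup F] [InnerProductSpace ℝ F]
    [MeasurableSpace F] [BorelSpace F] {d : ℝ} {h : F → ℝ} {U : Set F}
    (hh : IsHarmonicOn d h U) (c : ℝ) : IsHarmonicOn d (fun x => c * h x) U :=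
  ⟨continuousOn_const.mul hh.1, fun x r hr hx => by
    simp only
    rw [hh.2 x r hr hx, setAverage_eq, setAverage_eq, integral_const_mul, smul_eq_mul, smul_eq_mul]
    ring⟩

theorem IsHarmonicOn.add {g h : E → ℝ} {U : Set E}
    (hg : IsHarmonicOn ((Module.finrank ℝ E : ℝ) - 1) g U)
    (hh : IsHarmonicOn ((Module.finrank ℝ E : ℝ) - 1) h U) :
    IsHarmonicOn ((Module.finrank ℝ E : ℝ) - 1) (fun x => g x + h x) U := by
  refine ⟨hg.1.add hh.1, fun x r hr hx => ?_⟩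
  have hfin := isFiniteMeasure_surfaceMeasure (E := E) hr
  have hint : ∀ {k : E → ℝ}, ContinuousOn k U →
      Integrable (fun w => k (x + w)) (surfaceMeasure E r) := fun hk =>
    integrable_of_continuousOn_of_ae_mem (isCompact_sphere 0 r) (ae_mem_surfaceMeasure r)
      (hk.comp (by fun_prop) fun w hw => hx (by
        rw [mem_closedBall, dist_eq_norm, add_sub_cancel_left, mem_sphere_zero_iff_norm.1 hw]))
  simp only
  rw [hg.2 x r hr hx, hh.2 x r hr hx, setAverage_sphere_eq_surfaceMeasure,
    setAverage_sphere_eq_surfaceMeasure, setAverage_sphere_eq_surfaceMeasure,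
    integral_add (hint hg.1) (hint hh.1), mul_add]

/-- The restriction to `K` of the fundamental solution with pole `y ∉ K`. -/
noncomputable def newtonKernelOn (ν : ℝ) (K : Set E) (y : (Kᶜ : Set E)) : C(K, ℝ) where
  toFun x := newtonProfile ν (‖(x : E) - y‖ ^ 2)
  continuous_toFun := by
    refine (continuousOn_newtonProfile ν).comp_continuous (by fun_prop) fun x => ?_
    have : (x : E) - y ≠ 0 := fun h => y.2 (by rw [← sub_eq_zero.1 h]; exact x.2)
    exact mem_Ioi.2 (by positivity)

theorem exists_isHarmonicOn_of_mem_span (hν : 2 * ν = Module.finrank ℝ E)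
    (hn : 2 ≤ Module.finrank ℝ E) {K : Set E} {g : C(K, ℝ)}
    (hg : g ∈ Submodule.span ℝ (range (newtonKernelOn ν K))) :
    ∃ U : Set E, ∃ h : E → ℝ, IsOpen U ∧ K ⊆ U ∧
      IsHarmonicOn ((Module.finrank ℝ E : ℝ) - 1) h U ∧ ∀ x : K, g x = h x := by
  induction hg using Submodule.span_induction with
  | mem g hg =>
    obtain ⟨y, rfl⟩ := hg
    exact ⟨{(y : E)}ᶜ, _, isOpen_compl_singleton, subset_compl_singleton_iff.2 y.2,
      isHarmonicOn_newtonProfile hν hn y, fun x => rfl⟩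
  | zero => exact ⟨univ, fun _ => 0, isOpen_univ, subset_univ _, .zero, fun x => rfl⟩
  | add g g' _ _ ih ih' =>
    obtain ⟨U, h, hU, hKU, hh, hgh⟩ := ih
    obtain ⟨U', h', hU', hKU', hh', hgh'⟩ := ih'
    exact ⟨U ∩ U', _, hU.inter hU', subset_inter hKU hKU',
      (hh.mono inter_subset_left).add (hh'.mono inter_subset_right), fun x => by simp [hgh, hgh']⟩
  | smul c g _ ih =>
    obtain ⟨U, h, hU, hKU, hh, hgh⟩ := ih
    exact ⟨U, _, hU, hKU, hh.const_mul c, fun x => by simp [hgh]⟩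

theorem functional_eq_zero_of_forall_newtonKernelOn (hν : 2 * ν = Module.finrank ℝ E)
    (hn : 2 ≤ Module.finrank ℝ E) {K : Set E} (hK : IsCompact K) [Nonempty K]
    (hthin : ∀ x, ¬ ThinAt ((Module.finrank ℝ E : ℝ) - 1) Kᶜ x) (Λ : C(K, ℝ) →L[ℝ] ℝ)
    (hΛ : ∀ y, Λ (newtonKernelOn ν K y) = 0) : Λ = 0 := by
  have : CompactSpace K := isCompact_iff_compactSpace.1 hK
  obtain ⟨P, Q, hP, hQ, hPQ⟩ := exists_nonneg_sub_nonneg_eq Λ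
  obtain ⟨μ₁, hfin₁, h₁⟩ := exists_measure_of_nonneg_functional P hP
  obtain ⟨μ₂, hfin₂, h₂⟩ := exists_measure_of_nonneg_functional Q hQ
  have hemb : MeasurableEmbedding (Subtype.val : K → E) :=
    .subtype_coe hK.isClosed.measurableSet
  have hmem : ∀ μ : Measure K, ∀ᵐ x ∂μ.map Subtype.val, x ∈ K := fun μ =>
    hemb.ae_map_iff.2 (ae_of_all _ fun x => x.2)
  have hpot : newtonPotential ν (μ₁.map Subtype.val) = newtonPotential ν (μ₂.map Subtype.val) := by
    refine eq_of_eqOn_of_forall_not_thinAt hthin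
      (continuous_newtonPotential_fineTopology hν hn hK (hmem _))
      (continuous_newtonPotential_fineTopology hν hn hK (hmem _)) fun y hy => ?_
    rw [newtonPotential_eq_integral hK (hmem _) hy, newtonPotential_eq_integral hK (hmem _) hy,
      hemb.integral_map, hemb.integral_map, EReal.coe_eq_coe_iff]
    simp_rw [norm_sub_rev y]
    have e := hPQ (newtonKernelOn ν K ⟨y, hy⟩)
    rw [hΛ, ← h₁, ← h₂] at e
    exact (sub_eq_zero.1 e.symm)
  have hμ := hemb.map_injective (measure_eq_of_newtonPotential_eq hν hn hK (hmem _) (hmem _) hpot)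
  ext g
  rw [hPQ, ← h₁, ← h₂, hμ, sub_self]
  rfl

theorem exists_isHarmonicOn_approx (hn : 2 ≤ Module.finrank ℝ E) {K : Set E} (hK : IsCompact K)
    (hthin : ∀ x, ¬ ThinAt ((Module.finrank ℝ E : ℝ) - 1) Kᶜ x) (f : C(K, ℝ)) {ε : ℝ}
    (hε : 0 < ε) :
    ∃ U : Set E, ∃ h : E → ℝ, IsOpen U ∧ K ⊆ U ∧
      IsHarmonicOn ((Module.finrank ℝ E : ℝ) - 1) h U ∧ ∀ x : K, |f x - h x| < ε := by
  rcases isEmpty_or_nonempty K with hempty | hne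
  · exact ⟨univ, fun _ => 0, isOpen_univ, subset_univ _, .zero, fun x => hempty.elim x⟩
  have : CompactSpace K := isCompact_iff_compactSpace.1 hK
  have hν : 2 * ((Module.finrank ℝ E : ℝ) / 2) = Module.finrank ℝ E := by ring
  let k : (Kᶜ : Set E) → C(K, ℝ) := newtonKernelOn ((Module.finrank ℝ E : ℝ) / 2) K
  let H := Submodule.span ℝ (range k)
  have hdense : f ∈ closure (H : Set C(K, ℝ)) := by
    by_contra hf
    obtain ⟨Λ, u, hΛf, hΛ⟩ := geometric_hahn_banach_point_closed
      H.topologicalClosure.convex isClosed_closure hf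
    have hu : u < 0 := by simpa using hΛ 0 (zero_mem H.topologicalClosure)
    have hker : ∀ y, Λ (k y) = 0 := by
      intro y
      by_contra hne
      have hmem : k y ∈ H.topologicalClosure :=
        H.le_topologicalClosure (Submodule.subset_span (mem_range_self y))
      have := hΛ _ (H.topologicalClosure.smul_mem (u / Λ (k y)) hmem)
      rw [map_smul, smul_eq_mul, div_mul_cancel₀ _ hne] at this
      exact lt_irrefl _ this
    rw [functional_eq_zero_of_forall_newtonKernelOn hν hn hK hthin Λ hker] at hΛf
    exact lt_asymm hu hΛf
  obtain ⟨g, hg, hfg⟩ := Metric.mem_closure_iff.1 hdense ε hε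
  obtain ⟨U, h, hU, hKU, hh, hgh⟩ := exists_isHarmonicOn_of_mem_span hν hn hg
  refine ⟨U, h, hU, hKU, hh, fun x => ?_⟩
  rw [← hgh, ← Real.dist_eq]
  exact (ContinuousMap.dist_apply_le_dist x).trans_lt hfg

end Approximation

/-- harmonic approximation on a compact set with empty interior
whose complement is nowhere thin. -/
theorem harmonic_approximation_on_compact
    (N : ℕ) (hN : 2 ≤ N) (K : Set (EuclideanSpace ℝ (Fin N)))
    (hK : IsCompact K) (hKint : interior K = ∅)
    (hthin : ∀ x, ¬ ThinAt ((N : ℝ) - 1) Kᶜ x)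
    (f : EuclideanSpace ℝ (Fin N) → ℝ) (hf : ContinuousOn f K)
    (ε : ℝ) (hε : 0 < ε) :
    ∃ U : Set (EuclideanSpace ℝ (Fin N)), ∃ h : EuclideanSpace ℝ (Fin N) → ℝ,
      IsOpen U ∧ K ⊆ U ∧ IsHarmonicOn ((N : ℝ) - 1) h U ∧
      ∀ x ∈ K, |f x - h x| < ε := by
  have hfr : Module.finrank ℝ (EuclideanSpace ℝ (Fin N)) = N := finrank_euclideanSpace_fin
  have hd : (N : ℝ) - 1 = (Module.finrank ℝ (EuclideanSpace ℝ (Fin N)) : ℝ) - 1 := by rw [hfr]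
  rw [hd] at hthin ⊢
  obtain ⟨U, h, hU, hKU, hh, happ⟩ :=
    exists_isHarmonicOn_approx (hN.trans hfr.ge) hK hthin ⟨K.domRestrict f, hf.domRestrict⟩ hε
  exact ⟨U, h, hU, hKU, hh, fun x hx => happ ⟨x, hx⟩⟩
end
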